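/- arXiv:2302.02426 — 10 statements merged into one kernel-verified Lean document; each statement's English description precedes it below -/
import Mathlib

section
/- Let (Ω, F, P) be a probability space with a filtration (H_t)_{t∈ℕ} and let (Z_t)_{t∈ℕ} be a real-valued process adapted to (H_t) with Z_0 = 0. Let t₀ be a positive integer and let θ ≥ 0 and 0 < ν ≤ ν_max be constants such that: (i) for every t, almost surely on the event {Z_t ≥ θ}, E[Z_{t+t₀} − Z_t | H_t] ≤ −ν t₀; and (ii) |Z_{t+1} − Z_t| ≤ ν_max almost surely for every t. Then for every t, E[Z_t] ≤ θ + t₀ ν_max + t₀ (4ν_max²/ν) log(8ν_max²/ν²). -/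
open MeasureTheory

theorem aux_abs {Ω : Type*} {mΩ : MeasurableSpace Ω} (μ : Measure Ω)
    (Z : ℕ → Ω → ℝ) (V : ℝ) (hbdd : ∀ t, ∀ᵐ ω ∂μ, |Z (t + 1) ω - Z t ω| ≤ V) (s n : ℕ) :
    ∀ᵐ ω ∂μ, |Z (s + n) ω - Z s ω| ≤ n * V := by
  filter_upwards [ae_all_iff.2 hbdd] with ω h
  induction n with
  | zero => simp
  | succ n ih =>
    have h1 := h (s + n)
    have h2 := abs_add_le (Z (s + n + 1) ω - Z (s + n) ω) (Z (s + n) ω - Z s ω)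
    rw [sub_add_sub_cancel] at h2
    rw [← add_assoc]
    push_cast
    linarith

/-- one step of the exponential drift recursion -/
theorem aux_step {Ω : Type*} (m : MeasurableSpace Ω) {mΩ : MeasurableSpace Ω} (μ : Measure Ω)
    [IsProbabilityMeasure μ] (hm : m ≤ mΩ) (X Y : Ω → ℝ) (hX : Measurable[m] X) (hY : Measurable Y)
    (θ a B C r : ℝ) (hr : 0 < r) (hrB : r * B ≤ 1)
    (hρ : 0 ≤ 1 - r * a + (r * B) ^ 2)
    (hXC : ∀ᵐ ω ∂μ, |X ω| ≤ C) (hD : ∀ᵐ ω ∂μ, |Y ω - X ω| ≤ B)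
    (hdrift : ∀ᵐ ω ∂μ, θ ≤ X ω → (μ[Y - X | m]) ω ≤ -a) :
    ∫ ω, Real.exp (r * Y ω) ∂μ ≤
      (1 - r * a + (r * B) ^ 2) * ∫ ω, Real.exp (r * X ω) ∂μ + Real.exp (r * (θ + B)) := by
  have hX' : Measurable X := hX.mono hm le_rfl
  have hA : MeasurableSet[m] {ω | θ ≤ X ω} := measurableSet_le measurable_const hX
  set g : Ω → ℝ := {ω | θ ≤ X ω}.indicator (fun ω => Real.exp (r * X ω)) with hg
  have hgm : Measurable[m] g :=
    (Real.measurable_exp.comp (hX.const_mul r)).indicator hA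
  have hgm' : Measurable g := hgm.mono hm le_rfl
  have hg0 : ∀ ω, 0 ≤ g ω := fun ω => Set.indicator_nonneg (fun _ _ => (Real.exp_pos _).le) ω
  have hgle : ∀ ω, g ω ≤ Real.exp (r * X ω) := fun ω =>
    Set.indicator_le_self' (fun _ _ => (Real.exp_pos _).le) ω
  have hIX : Integrable (fun ω => Real.exp (r * X ω)) μ := by
    refine Integrable.of_bound (C := Real.exp (r * C))
      (Real.measurable_exp.comp (hX'.const_mul r)).aestronglyMeasurable ?_
    filter_upwards [hXC] with ω h
    rw [Real.norm_eq_abs, abs_of_pos (Real.exp_pos _)]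
    exact Real.exp_le_exp.2 (mul_le_mul_of_nonneg_left (le_of_abs_le h) hr.le)
  have hIY : Integrable (fun ω => Real.exp (r * Y ω)) μ := by
    refine Integrable.of_bound (C := Real.exp (r * (C + B)))
      (Real.measurable_exp.comp (hY.const_mul r)).aestronglyMeasurable ?_
    filter_upwards [hXC, hD] with ω h h'
    rw [Real.norm_eq_abs, abs_of_pos (Real.exp_pos _)]
    refine Real.exp_le_exp.2 (mul_le_mul_of_nonneg_left ?_ hr.le)
    linarith [le_of_abs_le h, le_of_abs_le h']
  have hIg : Integrable g μ := hIX.indicator (hm _ hA)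
  have hID : Integrable (Y - X) μ := by
    refine Integrable.of_bound (C := B) (hY.sub hX').aestronglyMeasurable ?_
    filter_upwards [hD] with ω h
    simpa using h
  have hIgD : Integrable (g * (Y - X)) μ := by
    refine Integrable.mul_bdd (c := B) hIg (hY.sub hX').aestronglyMeasurable ?_
    filter_upwards [hD] with ω h
    simpa using h
  have hpull := condExp_mul_of_stronglyMeasurable_left (μ := μ) hgm.stronglyMeasurable hIgD hID
  have hgD : ∫ ω, (g * (Y - X)) ω ∂μ ≤ -a * ∫ ω, g ω ∂μ := by
    rw [← integral_condExp hm, ← integral_const_mul]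
    refine integral_mono_ae integrable_condExp (hIg.const_mul _) ?_
    filter_upwards [hpull, hdrift] with ω h1 h2
    rw [h1, Pi.mul_apply]
    by_cases h : θ ≤ X ω
    · nlinarith [hg0 ω, h2 h]
    · have : g ω = 0 := Set.indicator_of_notMem (s := {ω | θ ≤ X ω}) h _
      simp [this]
  have hpt : ∀ᵐ ω ∂μ, Real.exp (r * Y ω) ≤
      ((1 + (r * B) ^ 2) * g ω + r * (g * (Y - X)) ω) + Real.exp (r * (θ + B)) := by
    filter_upwards [hD] with ω h'
    by_cases h : θ ≤ X ω
    · have hge : g ω = Real.exp (r * X ω) := Set.indicator_of_mem (s := {ω | θ ≤ X ω}) h _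
      have hx : |r * (Y ω - X ω)| ≤ r * B := by
        rw [abs_mul, abs_of_pos hr]; exact mul_le_mul_of_nonneg_left h' hr.le
      have h3 := le_of_abs_le (Real.abs_exp_sub_one_sub_id_le (hx.trans hrB))
      have h4 : (r * (Y ω - X ω)) ^ 2 ≤ (r * B) ^ 2 := by
        rw [← sq_abs]; exact pow_le_pow_left₀ (abs_nonneg _) hx 2
      have h5 : Real.exp (r * Y ω) = Real.exp (r * X ω) * Real.exp (r * (Y ω - X ω)) := by
        rw [← Real.exp_add]; congr 1; ring
      have h6 : Real.exp (r * (Y ω - X ω)) ≤ 1 + (r * B) ^ 2 + r * (Y ω - X ω) := by linarith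
      have h7 := mul_le_mul_of_nonneg_left h6 (Real.exp_pos (r * X ω)).le
      simp only [Pi.mul_apply, Pi.sub_apply, hge]
      rw [h5]
      linarith [Real.exp_pos (r * (θ + B))]
    · have : g ω = 0 := Set.indicator_of_notMem (s := {ω | θ ≤ X ω}) h _
      simp only [Pi.mul_apply, this, mul_zero, zero_mul, zero_add]
      refine Real.exp_le_exp.2 (mul_le_mul_of_nonneg_left ?_ hr.le)
      linarith [le_of_abs_le h']
  have hI1 := hIg.const_mul (1 + (r * B) ^ 2)
  have hI2 := hIgD.const_mul r
  have key := integral_mono_ae hIY ((hI1.add hI2).add (integrable_const _)) hpt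
  have e : ∫ ω, (((1 + (r * B) ^ 2) * g ω + r * (g * (Y - X)) ω) + Real.exp (r * (θ + B))) ∂μ
      = (1 + (r * B) ^ 2) * ∫ ω, g ω ∂μ + r * ∫ ω, (g * (Y - X)) ω ∂μ
        + Real.exp (r * (θ + B)) := by
    have hI3 : Integrable (fun ω => (1 + (r * B) ^ 2) * g ω + r * (g * (Y - X)) ω) μ :=
      hI1.add hI2
    rw [integral_add hI3 (integrable_const _), integral_add hI1 hI2,
      integral_const_mul, integral_const_mul]
    simp
  have key' := key.trans_eq e
  have hgi : ∫ ω, g ω ∂μ ≤ ∫ ω, Real.exp (r * X ω) ∂μ := integral_mono hIg hIX hgle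
  have h8 := mul_le_mul_of_nonneg_left hgD hr.le
  have h9 := mul_le_mul_of_nonneg_left hgi hρ
  linarith

/-- Multi-step Lyapunov drift lemma, expectation bound: if the
adapted process `Z` starts at `0`, has a negative `t₀`-step conditional drift
`≤ -ν t₀` on the event `{Z t ≥ θ}`, and bounded increments `|Z (t+1) - Z t| ≤ ν_max`,
then `E[Z t] ≤ θ + t₀ ν_max + t₀ (4 ν_max² / ν) log (8 ν_max² / ν²)` for all `t`. -/
theorem stmt3 {Ω : Type*} {mΩ : MeasurableSpace Ω} (μ : Measure Ω) [IsProbabilityMeasure μ]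
    (ℱ : Filtration ℕ mΩ) (Z : ℕ → Ω → ℝ) (hadapted : Adapted ℱ Z)
    (hZ0 : ∀ ω, Z 0 ω = 0)
    (t₀ : ℕ) (ht₀ : 0 < t₀) (θ ν νmax : ℝ)
    (hθ : 0 ≤ θ) (hν : 0 < ν) (hννmax : ν ≤ νmax)
    (hdrift : ∀ t, ∀ᵐ ω ∂μ, θ ≤ Z t ω →
      (μ[Z (t + t₀) - Z t | ℱ t]) ω ≤ -ν * t₀)
    (hbdd : ∀ t, ∀ᵐ ω ∂μ, |Z (t + 1) ω - Z t ω| ≤ νmax) :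
    ∀ t, ∫ ω, Z t ω ∂μ ≤
      θ + t₀ * νmax + t₀ * (4 * νmax ^ 2 / ν) * Real.log (8 * νmax ^ 2 / ν ^ 2) := by
  have hV : 0 < νmax := hν.trans_le hννmax
  have hT : (0 : ℝ) < t₀ := by exact_mod_cast ht₀
  have hZm : ∀ t, Measurable (Z t) := fun t => (hadapted t).mono (ℱ.le t) le_rfl
  have habs : ∀ t, ∀ᵐ ω ∂μ, |Z t ω| ≤ t * νmax := fun t => by
    filter_upwards [aux_abs μ Z νmax hbdd 0 t] with ω h
    simpa [hZ0] using h
  obtain ⟨r, hrdef⟩ : ∃ r : ℝ, r = ν / (4 * t₀ * νmax ^ 2) := ⟨_, rfl⟩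
  have hr : 0 < r := by rw [hrdef]; positivity
  obtain ⟨q, hq⟩ : ∃ q : ℝ, q = ν / νmax := ⟨_, rfl⟩
  have hq0 : 0 < q := by rw [hq]; positivity
  have hq1 : q ≤ 1 := by rw [hq]; exact (div_le_one hV).2 hννmax
  have hrB : r * (t₀ * νmax) = q / 4 := by rw [hrdef, hq]; field_simp
  have hra : r * (ν * t₀) = q ^ 2 / 4 := by rw [hrdef, hq]; field_simp
  obtain ⟨K, hK⟩ : ∃ K : ℝ, K = Real.exp (r * (θ + t₀ * νmax)) := ⟨_, rfl⟩
  have hK0 : 0 < K := by rw [hK]; exact Real.exp_pos _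
  have hL : 8 * νmax ^ 2 / ν ^ 2 = 8 / q ^ 2 := by rw [hq]; field_simp
  have hIW : ∀ t, Integrable (fun ω => Real.exp (r * Z t ω)) μ := fun t => by
    refine Integrable.of_bound (C := Real.exp (r * (t * νmax)))
      (Real.measurable_exp.comp ((hZm t).const_mul r)).aestronglyMeasurable ?_
    filter_upwards [habs t] with ω h
    rw [Real.norm_eq_abs, abs_of_pos (Real.exp_pos _)]
    exact Real.exp_le_exp.2 (mul_le_mul_of_nonneg_left (le_of_abs_le h) hr.le)
  have hW : ∀ t, ∫ ω, Real.exp (r * Z t ω) ∂μ ≤ K * (8 / q ^ 2) := by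
    intro t
    induction t using Nat.strong_induction_on with
    | _ t ih =>
    by_cases htt : t < t₀
    · have h1 : ∫ ω, Real.exp (r * Z t ω) ∂μ ≤ ∫ ω, K ∂μ := by
        refine integral_mono_ae (hIW t) (integrable_const _) ?_
        filter_upwards [habs t] with ω h
        rw [hK]
        refine Real.exp_le_exp.2 (mul_le_mul_of_nonneg_left ?_ hr.le)
        have : (t : ℝ) * νmax ≤ t₀ * νmax :=
          mul_le_mul_of_nonneg_right (by exact_mod_cast htt.le) hV.le
        linarith [le_of_abs_le h]
      have h2 : ∫ ω, K ∂μ = K := by simp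
      have h3 : 1 ≤ 8 / q ^ 2 := by rw [le_div_iff₀ (by positivity)]; nlinarith
      nlinarith
    · obtain ⟨s, rfl⟩ : ∃ s, t = s + t₀ := ⟨t - t₀, by omega⟩
      have hs := ih s (by omega)
      have hst := aux_step (ℱ s) μ (ℱ.le s) (Z s) (Z (s + t₀)) (hadapted s) (hZm _)
        θ (ν * t₀) (t₀ * νmax) (s * νmax) r hr (by rw [hrB]; linarith)
        (by rw [hrB, hra]; nlinarith) (habs s) (aux_abs μ Z νmax hbdd s t₀)
        (by filter_upwards [hdrift s] with ω h h'; linarith [h h'])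
      rw [hrB, hra, ← hK] at hst
      have hρ : 0 ≤ 1 - q ^ 2 / 4 + (q / 4) ^ 2 := by nlinarith
      have h1 := mul_le_mul_of_nonneg_left hs hρ
      have h2 : (1 - q ^ 2 / 4 + (q / 4) ^ 2) * (K * (8 / q ^ 2))
          = K * (8 / q ^ 2) - K * (3 / 2) := by field_simp; ring
      linarith
  intro t
  rw [hL]
  have hc : Real.exp (r * (θ + t₀ * νmax) + Real.log (8 / q ^ 2)) = K * (8 / q ^ 2) := by
    rw [Real.exp_add, Real.exp_log (by positivity), hK]
  obtain ⟨c, hcd⟩ : ∃ c : ℝ, c = r * (θ + t₀ * νmax) + Real.log (8 / q ^ 2) := ⟨_, rfl⟩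
  rw [← hcd] at hc
  have hIZ : Integrable (Z t) μ :=
    Integrable.of_bound (C := t * νmax) (hZm t).aestronglyMeasurable (habs t)
  have hJ : ∫ ω, r * Z t ω ∂μ ≤ ∫ ω, (Real.exp (-c) * Real.exp (r * Z t ω) + (c - 1)) ∂μ := by
    refine integral_mono (hIZ.const_mul r) (((hIW t).const_mul _).add (integrable_const _)) ?_
    intro ω
    have := Real.add_one_le_exp (-c + r * Z t ω)
    rw [Real.exp_add] at this
    simp only
    linarith
  rw [integral_add ((hIW t).const_mul _) (integrable_const _), integral_const_mul,
    integral_const_mul] at hJ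
  have h1 := mul_le_mul_of_nonneg_left (hW t) (Real.exp_pos (-c)).le
  rw [← hc, ← Real.exp_add, neg_add_cancel, Real.exp_zero] at h1
  have h2 : ∫ _ : Ω, (c - 1) ∂μ = c - 1 := by simp
  have h3 : r * ∫ ω, Z t ω ∂μ ≤ c := by linarith
  refine le_of_mul_le_mul_left (h3.trans_eq ?_) hr
  have h4 : r * (t₀ * (4 * νmax ^ 2 / ν)) = 1 := by rw [hrdef]; field_simp
  rw [hcd]
  linear_combination (-Real.log (8 / q ^ 2)) * h4
end

section
/- Let A ∈ ℝ^{n×n}, B ∈ ℝ^{n×m} with ‖B‖₂ ≤ κ_B, let K ∈ ℝ^{m×n} be (κ,ρ)-strongly stable with respect to (A,B), set Ã = A − BK, and let H ≥ 1 and a > 0. Suppose for each time s and each i ∈ {1,…,H} there is a matrix M_s^{[i]} ∈ ℝ^{m×n} with ‖M_s^{[i]}‖₂ ≤ a(1−ρ)^i. Define, for integers t and i ≥ 1, the disturbance-state transfer matrix Ψ_{t,i} = Ã^{i−1}·1(i ≤ H) + Σ_{j=1}^{H} Ã^{j−1} B M_{t−j}^{[i−j]}·1(1 ≤ i−j ≤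 H). Then ‖Ψ_{t,i}‖₂ ≤ κ²(1−ρ)^{i−1}·1(i ≤ H) + H a κ² κ_B (1−ρ)^{i−1}. -/
/-- `ℝ^k` with the Euclidean norm; linear maps between such spaces, with the
operator norm, play the role of matrices with the spectral norm. -/
abbrev Euc (k : ℕ) := EuclideanSpace ℝ (Fin k)

/-- `K` is `(κ, ρ)`-strongly stable with respect to `(A, B)`:
`κ ≥ 1`, `ρ ∈ (0,1]`, `‖K‖₂ ≤ κ`, and there are `U` (invertible) and `L` with
`A - B K = U L U⁻¹`, `‖U‖₂ ≤ κ`, `‖U⁻¹‖₂ ≤ κ`, `‖L‖₂ ≤ 1 - ρ`. -/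
def IsStronglyStable {n m : ℕ} (A : Euc n →L[ℝ] Euc n) (B : Euc m →L[ℝ] Euc n)
    (K : Euc n →L[ℝ] Euc m) (κ ρ : ℝ) : Prop :=
  1 ≤ κ ∧ 0 < ρ ∧ ρ ≤ 1 ∧ ‖K‖ ≤ κ ∧
    ∃ (U : Euc n ≃L[ℝ] Euc n) (L : Euc n →L[ℝ] Euc n),
      A - B ∘L K = (U : Euc n →L[ℝ] Euc n) ∘L L ∘L (U.symm : Euc n →L[ℝ] Euc n) ∧
      ‖(U : Euc n →L[ℝ] Euc n)‖ ≤ κ ∧ ‖(U.symm : Euc n →L[ℝ] Euc n)‖ ≤ κ ∧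
      ‖L‖ ≤ 1 - ρ

theorem pow_bound_aux {n : ℕ} (T L : Euc n →L[ℝ] Euc n) (U : Euc n ≃L[ℝ] Euc n) (κ ρ : ℝ)
    (hκ : 1 ≤ κ) (hρ : ρ ≤ 1)
    (hT : T = (U : Euc n →L[ℝ] Euc n) ∘L L ∘L (U.symm : Euc n →L[ℝ] Euc n))
    (hU : ‖(U : Euc n →L[ℝ] Euc n)‖ ≤ κ) (hV : ‖(U.symm : Euc n →L[ℝ] Euc n)‖ ≤ κ)
    (hL : ‖L‖ ≤ 1 - ρ) (k : ℕ) : ‖T ^ k‖ ≤ κ ^ 2 * (1 - ρ) ^ k := by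
  have h0 : 0 ≤ 1 - ρ := by linarith
  have hpow : T ^ k =
      (U : Euc n →L[ℝ] Euc n) ∘L (L ^ k) ∘L (U.symm : Euc n →L[ℝ] Euc n) := by
    induction k with
    | zero => ext x; simp
    | succ k ih => rw [pow_succ, ih, hT]; ext x; simp [pow_succ]
  have hLk : ‖L ^ k‖ ≤ (1 - ρ) ^ k := by
    induction k with
    | zero => rw [pow_zero, pow_zero]; exact ContinuousLinearMap.norm_id_le
    | succ k ih =>
      by_cases hk : k = 0
      · subst hk; simpa using hL
      · exact (norm_pow_le' L (Nat.succ_pos k)).trans (pow_le_pow_left₀ (norm_nonneg _) hL _)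
  rw [hpow]
  calc _ ≤ ‖(U : Euc n →L[ℝ] Euc n)‖ * (‖L ^ k‖ * ‖(U.symm : Euc n →L[ℝ] Euc n)‖) :=
        (ContinuousLinearMap.opNorm_comp_le _ _).trans
          (mul_le_mul_of_nonneg_left (ContinuousLinearMap.opNorm_comp_le _ _) (norm_nonneg _))
    _ ≤ κ * ((1 - ρ) ^ k * κ) := by gcongr
    _ = _ := by ring

/-- Bound on the disturbance-state transfer matrix
`Ψ_{t,i} = Ã^{i−1}·1(i ≤ H) + Σ_{j=1}^{H} Ã^{j−1} B M_{t−j}^{[i−j]}·1(1 ≤ i−j ≤ H)`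
of a disturbance-action policy:
`‖Ψ_{t,i}‖₂ ≤ κ²(1−ρ)^{i−1}·1(i ≤ H) + H a κ² κ_B (1−ρ)^{i−1}`. -/
theorem stmt6 {n m : ℕ} (A : Euc n →L[ℝ] Euc n) (B : Euc m →L[ℝ] Euc n)
    (K : Euc n →L[ℝ] Euc m) (κ ρ κB : ℝ)
    (hstab : IsStronglyStable A B K κ ρ) (hB : ‖B‖ ≤ κB)
    (H : ℕ) (hH : 1 ≤ H) (a : ℝ) (ha : 0 < a)
    (M : ℤ → ℕ → (Euc n →L[ℝ] Euc m))
    (hM : ∀ s : ℤ, ∀ i ∈ Finset.Icc 1 H, ‖M s i‖ ≤ a * (1 - ρ) ^ i)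
    (t : ℤ) (i : ℕ) (hi : 1 ≤ i) :
    ‖(if i ≤ H then (A - B ∘L K) ^ (i - 1) else 0) +
        ∑ j ∈ Finset.Icc 1 H,
          (if 1 ≤ i - j ∧ i - j ≤ H then
            ((A - B ∘L K) ^ (j - 1)) ∘L (B ∘L M (t - (j : ℤ)) (i - j)) else 0)‖
      ≤ κ ^ 2 * (1 - ρ) ^ (i - 1) * (if i ≤ H then 1 else 0) +
          (H : ℝ) * a * κ ^ 2 * κB * (1 - ρ) ^ (i - 1) := by
  obtain ⟨hκ, hρ0, hρ, hK, U, L, hT, hU, hV, hL⟩ := hstab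
  have h0 : 0 ≤ 1 - ρ := by linarith
  have hκB : 0 ≤ κB := (norm_nonneg _).trans hB
  have hP := pow_bound_aux _ L U κ ρ hκ hρ hT hU hV hL
  generalize A - B ∘L K = T at hP
  refine (norm_add_le _ _).trans (add_le_add ?_ ?_)
  · split_ifs
    · simpa using hP (i - 1)
    · simp
  · refine (norm_sum_le_of_le (f := _) _ (n := fun _ => a * κ ^ 2 * κB * (1 - ρ) ^ (i - 1)) ?_).trans ?_
    · intro j hj
      rw [Finset.mem_Icc] at hj
      split_ifs with h
      · have hMj := hM (t - (j : ℤ)) (i - j) (Finset.mem_Icc.2 h)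
        have he : i - 1 = (j - 1) + (i - j) := by omega
        calc _ ≤ ‖T ^ (j - 1)‖ * (‖B‖ * ‖M (t - (j : ℤ)) (i - j)‖) :=
              (ContinuousLinearMap.opNorm_comp_le _ _).trans
                (mul_le_mul_of_nonneg_left (ContinuousLinearMap.opNorm_comp_le _ _)
                  (norm_nonneg _))
          _ ≤ (κ ^ 2 * (1 - ρ) ^ (j - 1)) * (κB * (a * (1 - ρ) ^ (i - j))) := by
              gcongr
              exact hP _
          _ = _ := by rw [he, pow_add]; ring
      · rw [norm_zero]; positivity
    · simp only [Finset.sum_const, Nat.card_Icc, nsmul_eq_mul, Nat.add_sub_cancel]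
      apply le_of_eq; ring
end

section
/- Consider the linear system x_{t+1} = A x_t + B u_t + w_t with x_1 = 0, where A ∈ ℝ^{n×n}, B ∈ ℝ^{n×m} with ‖B‖₂ ≤ κ_B, K ∈ ℝ^{m×n} is (κ,ρ)-strongly stable with respect to (A,B), the disturbances satisfy ‖w_t‖ ≤ W for all t (with the convention w_s = 0 for s ≤ 0), and the control is the disturbance-action policy u_t = −K x_t + Σ_{i=1}^{H} M_t^{[i]} w_{t−i} with weights satisfying ‖M_t^{[i]}‖₂ ≤ a(1−ρ)^i for all t and i ∈ {1,…,H}. Assume κ²(1−ρ)^H < 1 and H κ_B κ² ≥ 1, and set D = W(κ² + H a κ_B κ²) / (ρ(1 − κ²(1−ρ)^H)). Then for every t ≥ 1, ‖x_t‖ ≤ D and ‖u_t‖ ≤ (κ + 1) D. -/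
/-- Boundedness of states and actions under a disturbance-action
policy: for the linear system `x_{t+1} = A x_t + B u_t + w_t` with `x_1 = 0`,
`(κ,ρ)`-strongly stable `K`, `‖B‖₂ ≤ κ_B`, `‖w_t‖ ≤ W` (and `w_s = 0` for `s ≤ 0`),
and `u_t = -K x_t + Σ_{i=1}^H M_t^{[i]} w_{t-i}` with `‖M_t^{[i]}‖₂ ≤ a (1-ρ)^i`,
assuming `κ²(1-ρ)^H < 1` and `H κ_B κ² ≥ 1`, with
`D = W (κ² + H a κ_B κ²) / (ρ (1 - κ²(1-ρ)^H))`, one has `‖x_t‖ ≤ D` and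
`‖u_t‖ ≤ (κ+1) D` for every `t ≥ 1`. -/
theorem stmt7 {n m : ℕ} (A : Euc n →L[ℝ] Euc n) (B : Euc m →L[ℝ] Euc n)
    (K : Euc n →L[ℝ] Euc m) (κ ρ κB W a D : ℝ)
    (hstab : IsStronglyStable A B K κ ρ) (hB : ‖B‖ ≤ κB)
    (H : ℕ) (hH : 1 ≤ H) (ha : 0 < a)
    (w : ℤ → Euc n) (hw0 : ∀ s : ℤ, s ≤ 0 → w s = 0) (hwW : ∀ s : ℤ, ‖w s‖ ≤ W)
    (M : ℕ → ℕ → (Euc n →L[ℝ] Euc m))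
    (hM : ∀ t : ℕ, ∀ i ∈ Finset.Icc 1 H, ‖M t i‖ ≤ a * (1 - ρ) ^ i)
    (hcontr : κ ^ 2 * (1 - ρ) ^ H < 1) (hHκ : 1 ≤ (H : ℝ) * κB * κ ^ 2)
    (hD : D = W * (κ ^ 2 + (H : ℝ) * a * κB * κ ^ 2) /
      (ρ * (1 - κ ^ 2 * (1 - ρ) ^ H)))
    (x : ℕ → Euc n) (u : ℕ → Euc m)
    (hx1 : x 1 = 0)
    (hu : ∀ t : ℕ, 1 ≤ t →
      u t = -(K (x t)) + ∑ i ∈ Finset.Icc 1 H, M t i (w ((t : ℤ) - (i : ℤ))))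
    (hx : ∀ t : ℕ, 1 ≤ t → x (t + 1) = A (x t) + B (u t) + w (t : ℤ)) :
    ∀ t : ℕ, 1 ≤ t → ‖x t‖ ≤ D ∧ ‖u t‖ ≤ (κ + 1) * D := by
  obtain ⟨hκ, hρ, hρ1, hK, U, L, hUL, hU, hU', hL⟩ := hstab
  have hW : 0 ≤ W := (norm_nonneg _).trans (hwW 0)
  have hκB : 0 ≤ κB := (norm_nonneg _).trans hB
  have hκ0 : 0 ≤ κ := by linarith
  have hq : 0 ≤ 1 - ρ := by linarith
  have hH0 : (0:ℝ) ≤ H := Nat.cast_nonneg H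
  -- bound on the policy term
  have hS0 : ∀ t : ℕ, ‖∑ i ∈ Finset.Icc 1 H, M t i (w ((t : ℤ) - (i : ℤ)))‖
      ≤ a * W * ∑ i ∈ Finset.Icc 1 H, (1 - ρ) ^ i := by
    intro t
    rw [Finset.mul_sum]
    refine norm_sum_le_of_le _ fun i hi => ?_
    calc ‖M t i (w ((t : ℤ) - (i : ℤ)))‖ ≤ (a * (1 - ρ) ^ i) * W :=
          (M t i).le_of_opNorm_le_of_le (hM t i hi) (hwW _)
      _ = a * W * (1 - ρ) ^ i := by ring
  have hsum1 : ∑ i ∈ Finset.Icc 1 H, (1 - ρ) ^ i ≤ (H : ℝ) := by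
    calc ∑ i ∈ Finset.Icc 1 H, (1 - ρ) ^ i ≤ ∑ i ∈ Finset.Icc 1 H, (1:ℝ) :=
          Finset.sum_le_sum fun i _ => pow_le_one₀ hq (by linarith)
      _ = H := by simp
  have hgeo : ∀ N : ℕ, ρ * ∑ i ∈ Finset.Icc 1 N, (1 - ρ) ^ i = (1 - ρ) - (1 - ρ) ^ (N + 1) := by
    intro N
    induction N with
    | zero => simp
    | succ k ih =>
      rw [Finset.sum_Icc_succ_top (by omega), mul_add, ih]
      ring
  have hsum2 : ∑ i ∈ Finset.Icc 1 H, (1 - ρ) ^ i ≤ 1 / ρ := by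
    rw [le_div_iff₀ hρ, mul_comm, hgeo]
    have := pow_nonneg hq (H + 1)
    linarith
  have haW : 0 ≤ a * W := by positivity
  have hSH : ∀ t : ℕ, ‖∑ i ∈ Finset.Icc 1 H, M t i (w ((t : ℤ) - (i : ℤ)))‖ ≤ a * W * H :=
    fun t => (hS0 t).trans (mul_le_mul_of_nonneg_left hsum1 haW)
  have hSρ : ∀ t : ℕ, ‖∑ i ∈ Finset.Icc 1 H, M t i (w ((t : ℤ) - (i : ℤ)))‖ ≤ a * W * (1 / ρ) :=
    fun t => (hS0 t).trans (mul_le_mul_of_nonneg_left hsum2 haW)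
  -- lower bound on D
  have hDlow : W * (κ ^ 2 + (H : ℝ) * a * κB * κ ^ 2) / ρ ≤ D := by
    rw [hD]
    apply div_le_div_of_nonneg_left (by positivity)
    · exact mul_pos hρ (by linarith)
    · have : 0 ≤ κ ^ 2 * (1 - ρ) ^ H := by positivity
      nlinarith
  have hy : ∀ t : ℕ, 1 ≤ t → ‖U.symm (x t)‖ ≤ κ * (κB * (a * W * H) + W) / ρ := by
    intro t ht
    induction t, ht using Nat.le_induction with
    | base => rw [hx1]; simp; positivity
    | succ t ht ih =>
      have e1 : x (t + 1) = U (L (U.symm (x t))) +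
          (B (∑ i ∈ Finset.Icc 1 H, M t i (w ((t : ℤ) - (i : ℤ)))) + w t) := by
        have e2 : A (x t) - B (K (x t)) = U (L (U.symm (x t))) := by
          simpa using congrArg (fun T : Euc n →L[ℝ] Euc n => T (x t)) hUL
        rw [hx t ht, hu t ht, ← e2, map_add, map_neg]
        abel
      rw [e1, map_add, U.symm_apply_apply]
      have b1 : ‖L (U.symm (x t))‖ ≤ (1 - ρ) * (κ * (κB * (a * W * H) + W) / ρ) :=
        L.le_of_opNorm_le_of_le hL ih
      have b2 : ‖B (∑ i ∈ Finset.Icc 1 H, M t i (w ((t : ℤ) - (i : ℤ)))) + w t‖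
          ≤ κB * (a * W * H) + W :=
        norm_add_le_of_le (B.le_of_opNorm_le_of_le hB (hSH t)) (hwW _)
      have b3 := (U.symm : Euc n →L[ℝ] Euc n).le_of_opNorm_le_of_le hU' b2
      refine (norm_add_le_of_le b1 b3).trans (le_of_eq ?_)
      field_simp
      ring
  have hxD : ∀ t : ℕ, 1 ≤ t → ‖x t‖ ≤ D := by
    intro t ht
    have h := (U : Euc n →L[ℝ] Euc n).le_of_opNorm_le_of_le hU (hy t ht)
    have e : (U : Euc n →L[ℝ] Euc n) (U.symm (x t)) = x t := U.apply_symm_apply _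
    rw [e] at h
    refine h.trans (le_trans (le_of_eq ?_) hDlow)
    ring
  intro t ht
  refine ⟨hxD t ht, ?_⟩
  rw [hu t ht]
  have c1 : ‖-(K (x t))‖ ≤ κ * D := by
    rw [norm_neg]
    exact K.le_of_opNorm_le_of_le hK (hxD t ht)
  have c2 : a * W * (1 / ρ) ≤ D := by
    refine le_trans ?_ hDlow
    rw [mul_one_div]
    apply div_le_div_of_nonneg_right _ hρ.le
    have : 0 ≤ W * κ ^ 2 := by positivity
    nlinarith [mul_le_mul_of_nonneg_left hHκ haW]
  refine (norm_add_le_of_le c1 ((hSρ t).trans c2)).trans (le_of_eq ?_)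
  ring
end

section
/- Under the hypotheses of the state-boundedness setting (linear system x_{t+1} = A x_t + B u_t + w_t with x_1 = 0, ‖B‖₂ ≤ κ_B, K (κ,ρ)-strongly stable, ‖w_t‖ ≤ W with w_s = 0 for s ≤ 0, disturbance-action policy u_t = −K x_t + Σ_{i=1}^{H} M_t^{[i]} w_{t−i} with ‖M_t^{[i]}‖₂ ≤ a(1−ρ)^i, κ²(1−ρ)^H < 1, H κ_B κ² ≥ 1, and D = W(κ² + H a κ_B κ²)/(ρ(1 − κ²(1−ρ)^H))), define for t > H the approximated state x̃_t = x_t − (A−BK)^H x_{t−H} and approximated action ũ_t = −K x̃_t + Σ_{i=1}^{H} M_t^{[i]} w_{t−i}. Then ‖x_t − x̃_t‖ ≤ κ²(1−ρ)^H D and ‖u_t − ũ_t‖ ≤ κ³(1−ρ)^H D. -/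
/-- Approximation error of the truncated states and actions: in
the state-boundedness setting of the disturbance-action policy, defining for
`t > H` the approximated state `x̃_t = x_t - (A - BK)^H x_{t-H}` and action
`ũ_t = -K x̃_t + Σ_{i=1}^H M_t^{[i]} w_{t-i}`, one has
`‖x_t - x̃_t‖ ≤ κ²(1-ρ)^H D` and `‖u_t - ũ_t‖ ≤ κ³(1-ρ)^H D`. -/
theorem stmt8 {n m : ℕ} (A : Euc n →L[ℝ] Euc n) (B : Euc m →L[ℝ] Euc n)
    (K : Euc n →L[ℝ] Euc m) (κ ρ κB W a D : ℝ)
    (hstab : IsStronglyStable A B K κ ρ) (hB : ‖B‖ ≤ κB)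
    (H : ℕ) (hH : 1 ≤ H) (ha : 0 < a)
    (w : ℤ → Euc n) (hw0 : ∀ s : ℤ, s ≤ 0 → w s = 0) (hwW : ∀ s : ℤ, ‖w s‖ ≤ W)
    (M : ℕ → ℕ → (Euc n →L[ℝ] Euc m))
    (hM : ∀ t : ℕ, ∀ i ∈ Finset.Icc 1 H, ‖M t i‖ ≤ a * (1 - ρ) ^ i)
    (hcontr : κ ^ 2 * (1 - ρ) ^ H < 1) (hHκ : 1 ≤ (H : ℝ) * κB * κ ^ 2)
    (hD : D = W * (κ ^ 2 + (H : ℝ) * a * κB * κ ^ 2) /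
      (ρ * (1 - κ ^ 2 * (1 - ρ) ^ H)))
    (x : ℕ → Euc n) (u : ℕ → Euc m)
    (hx1 : x 1 = 0)
    (hu : ∀ t : ℕ, 1 ≤ t →
      u t = -(K (x t)) + ∑ i ∈ Finset.Icc 1 H, M t i (w ((t : ℤ) - (i : ℤ))))
    (hx : ∀ t : ℕ, 1 ≤ t → x (t + 1) = A (x t) + B (u t) + w (t : ℤ))
    (xtil : ℕ → Euc n) (util : ℕ → Euc m)
    (hxtil : ∀ t : ℕ, H < t → xtil t = x t - ((A - B ∘L K) ^ H) (x (t - H)))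
    (hutil : ∀ t : ℕ, H < t →
      util t = -(K (xtil t)) + ∑ i ∈ Finset.Icc 1 H, M t i (w ((t : ℤ) - (i : ℤ)))) :
    ∀ t : ℕ, H < t →
      ‖x t - xtil t‖ ≤ κ ^ 2 * (1 - ρ) ^ H * D ∧
      ‖u t - util t‖ ≤ κ ^ 3 * (1 - ρ) ^ H * D := by
  obtain ⟨hκ, hρ, hρ1, hK, U, L, hUL, hU, hUs, hL⟩ := hstab
  have hW : 0 ≤ W := (norm_nonneg _).trans (hwW 0)
  have hκ0 : 0 ≤ κ := by linarith
  have hκB : 0 ≤ κB := (norm_nonneg _).trans hB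
  have hr : 0 ≤ 1 - ρ := by linarith
  have hy : ∀ v, A v - B (K v) = U (L (U.symm v)) := by
    intro v
    have := congrArg (fun T : Euc n →L[ℝ] Euc n => T v) hUL
    simpa using this
  have hpow : ∀ k : ℕ, ∀ v, ((A - B ∘L K) ^ k) v = U ((L ^ k) (U.symm v)) := by
    intro k
    induction k with
    | zero => intro v; simp
    | succ k ih =>
      intro v
      rw [pow_succ, pow_succ, ContinuousLinearMap.mul_apply, ContinuousLinearMap.mul_apply, ih, hUL]
      simp
  have hUv : ∀ v, ‖U v‖ ≤ κ * ‖v‖ := fun v =>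
    (U : Euc n →L[ℝ] Euc n).le_of_opNorm_le hU v
  have hUsv : ∀ v, ‖U.symm v‖ ≤ κ * ‖v‖ := fun v =>
    (U.symm : Euc n →L[ℝ] Euc n).le_of_opNorm_le hUs v
  set V : ℝ := W * (1 + (H : ℝ) * a * κB) with hV
  have hV0 : 0 ≤ V := by positivity
  have hS : ∀ t : ℕ, ‖∑ i ∈ Finset.Icc 1 H, M t i (w ((t : ℤ) - (i : ℤ)))‖ ≤ H * (a * W) := by
    intro t
    have : ∀ i ∈ Finset.Icc 1 H, ‖M t i (w ((t : ℤ) - (i : ℤ)))‖ ≤ a * W := by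
      intro i hi
      have h1 : ‖M t i‖ ≤ a := (hM t i hi).trans
        (mul_le_of_le_one_right ha.le (pow_le_one₀ hr (by linarith)))
      exact ((M t i).le_of_opNorm_le h1 _).trans (mul_le_mul_of_nonneg_left (hwW _) ha.le)
    refine (norm_sum_le_of_le _ this).trans ?_
    simp
  have hz : ∀ t : ℕ, 1 ≤ t → ‖U.symm (x t)‖ ≤ κ * V / ρ := by
    intro t ht
    induction t, ht using Nat.le_induction with
    | base => rw [hx1]; simp; positivity
    | succ t ht ih =>
      set S := ∑ i ∈ Finset.Icc 1 H, M t i (w ((t : ℤ) - (i : ℤ))) with hSd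
      have e : x (t + 1) = U (L (U.symm (x t))) + (B S + w t) := by
        rw [hx t ht, hu t ht, ← hy, map_add, map_neg]
        abel
      have e2 : U.symm (x (t + 1)) = L (U.symm (x t)) + U.symm (B S + w t) := by
        rw [e, map_add, U.symm_apply_apply]
      have b1 : ‖B S + w t‖ ≤ V := by
        have h1 : ‖B S‖ ≤ κB * (H * (a * W)) :=
          (B.le_of_opNorm_le hB _).trans (mul_le_mul_of_nonneg_left (hS t) hκB)
        have := norm_add_le (B S) (w t)
        have := hwW t
        rw [hV]; linarith
      have b2 : ‖U.symm (B S + w t)‖ ≤ κ * V :=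
        (hUsv _).trans (mul_le_mul_of_nonneg_left b1 hκ0)
      have b3 : ‖L (U.symm (x t))‖ ≤ (1 - ρ) * (κ * V / ρ) :=
        (L.le_of_opNorm_le hL _).trans (mul_le_mul_of_nonneg_left ih hr)
      have b4 : (1 - ρ) * (κ * V / ρ) + κ * V = κ * V / ρ := by
        field_simp; ring
      rw [e2]
      have := norm_add_le (L (U.symm (x t))) (U.symm (B S + w t))
      linarith
  have hDz : κ * (κ * V / ρ) ≤ D := by
    have hq : 0 ≤ κ ^ 2 * (1 - ρ) ^ H := by positivity
    have : κ * (κ * V / ρ) = W * (κ ^ 2 + (H : ℝ) * a * κB * κ ^ 2) / ρ := by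
      rw [hV]; ring
    rw [this, hD]
    apply div_le_div_of_nonneg_left (by positivity) (mul_pos hρ (by linarith))
    exact mul_le_of_le_one_right hρ.le (by linarith)
  intro t ht
  have hLp : ‖L ^ H‖ ≤ (1 - ρ) ^ H :=
    (norm_pow_le' L (by omega)).trans (pow_le_pow_left₀ (norm_nonneg _) hL _)
  have key : ‖x t - xtil t‖ ≤ κ ^ 2 * (1 - ρ) ^ H * D := by
    rw [hxtil t ht, sub_sub_cancel, hpow]
    have h1 := hz (t - H) (by omega)
    have h2 := (L ^ H).le_of_opNorm_le hLp (U.symm (x (t - H)))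
    have hp : 0 ≤ (1 - ρ) ^ H := by positivity
    have h0 : 0 ≤ κ * V / ρ := by positivity
    have hκ2 : κ ≤ κ ^ 2 := by nlinarith
    calc _ ≤ κ * ((1 - ρ) ^ H * (κ * V / ρ)) :=
          (hUv _).trans (mul_le_mul_of_nonneg_left
            (h2.trans (mul_le_mul_of_nonneg_left h1 hp)) hκ0)
      _ = (1 - ρ) ^ H * (κ * (κ * V / ρ)) := by ring
      _ ≤ (1 - ρ) ^ H * D := mul_le_mul_of_nonneg_left hDz hp
      _ ≤ κ ^ 2 * ((1 - ρ) ^ H * D) := by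
          have : 0 ≤ D := le_trans (by positivity) hDz
          exact le_mul_of_one_le_left (by positivity) (by linarith)
      _ = _ := by ring
  refine ⟨key, ?_⟩
  have e : u t - util t = -(K (x t - xtil t)) := by
    rw [hu t (by omega), hutil t ht, map_sub]; abel
  rw [e, norm_neg]
  calc _ ≤ κ * (κ ^ 2 * (1 - ρ) ^ H * D) :=
        (K.le_of_opNorm_le hK _).trans (mul_le_mul_of_nonneg_left key hκ0)
    _ = _ := by ring
end

section
/- Consider the COCO-Soft iteration with Q_1 = 0. Suppose there exists M^ε ∈ M with h(M^ε) ≤ 0 and g_t(M^ε) + ε ≤ 0 for all t ∈ {1,…,T}. Then Σ_{t=1}^{T} (f_t(M_t) − f_t(M^ε)) + (η/V) Σ_{t=1}^{T} h⁺(M_{t+1}) ≤ T V L² / (4α) + 2 T ν_max² / V + α D² / V, where ν_max = E₀ + L D + ε. -/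
open scoped RealInnerProductSpace

lemma aux_first_order {EH : Type*} [NormedAddCommGroup EH] [InnerProductSpace ℝ EH]
    [FiniteDimensional ℝ EH] (f : EH → ℝ) (hc : ConvexOn ℝ Set.univ f)
    (hd : Differentiable ℝ f) (x y : EH) :
    f x + ⟪y - x, gradient f x⟫ ≤ f y := by
  have hg : HasGradientAt f (gradient f x) x := (hd x).hasGradientAt
  have hline : HasDerivAt (fun s : ℝ => x + s • (y - x)) (y - x) 0 := by
    simpa using ((hasDerivAt_id (0:ℝ)).smul_const (y - x)).const_add x
  have hF : HasFDerivAt f (InnerProductSpace.toDual ℝ EH (gradient f x))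
      ((fun s : ℝ => x + s • (y - x)) 0) := by
    simpa using hg.hasFDerivAt
  have hderiv := hF.comp_hasDerivAt (0:ℝ) hline
  have hconv : ConvexOn ℝ Set.univ (f ∘ (fun s : ℝ => x + s • (y - x))) := by
    refine ⟨convex_univ, ?_⟩
    intro a _ b _ p q hp hq hpq
    have := hc.2 (Set.mem_univ (x + a • (y - x))) (Set.mem_univ (x + b • (y - x))) hp hq hpq
    have e : p • (x + a • (y - x)) + q • (x + b • (y - x))
        = x + (p • a + q • b) • (y - x) := by
      have : p = 1 - q := by linarith
      subst this
      simp only [smul_eq_mul]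
      module
    rw [e] at this
    exact this
  have := hconv.le_slope_of_hasDerivAt (Set.mem_univ (0:ℝ)) (Set.mem_univ (1:ℝ)) one_pos hderiv
  rw [InnerProductSpace.toDual_apply_apply, slope_def_field] at this
  simp only [Function.comp_apply, one_smul, zero_smul, add_zero, sub_zero, div_one,
    add_sub_cancel] at this
  rw [real_inner_comm]
  linarith

lemma aux_strong {EH : Type*} [NormedAddCommGroup EH] [InnerProductSpace ℝ EH]
    (S : Set EH) (hS : Convex ℝ S) (φ : EH → ℝ) (hφ : ConvexOn ℝ Set.univ φ)
    (c m : EH) (hm : m ∈ S) (α : ℝ) (hα : 0 < α)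
    (hmin : ∀ y ∈ S, φ m + α * ‖m - c‖ ^ 2 ≤ φ y + α * ‖y - c‖ ^ 2)
    (y : EH) (hy : y ∈ S) :
    φ m + α * ‖m - c‖ ^ 2 + α * ‖y - m‖ ^ 2 ≤ φ y + α * ‖y - c‖ ^ 2 := by
  have key : ∀ s : ℝ, 0 < s → s < 1 →
      φ m + α * ‖m - c‖ ^ 2 + (1 - s) * (α * ‖y - m‖ ^ 2) ≤ φ y + α * ‖y - c‖ ^ 2 := by
    intro s hs0 hs1
    have hz := hS hm hy (by linarith : (0:ℝ) ≤ 1 - s) hs0.le (by ring)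
    have h1 := hmin _ hz
    have h2 := hφ.2 (Set.mem_univ m) (Set.mem_univ y)
      (by linarith : (0:ℝ) ≤ 1 - s) hs0.le (by ring)
    simp only [smul_eq_mul] at h2
    have e : ‖(1 - s) • m + s • y - c‖ ^ 2
        = (1 - s) * ‖m - c‖ ^ 2 + s * ‖y - c‖ ^ 2 - s * (1 - s) * ‖y - m‖ ^ 2 := by
      have e1 : (1 - s) • m + s • y - c = (1 - s) • (m - c) + s • (y - c) := by module
      have e2 : y - m = (y - c) - (m - c) := by abel
      rw [e1, e2, norm_add_sq_real, norm_sub_sq_real (y - c), norm_smul, norm_smul,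
        inner_smul_left, inner_smul_right, real_inner_comm (y - c) (m - c), mul_pow, mul_pow]
      simp only [Real.norm_eq_abs, sq_abs, conj_trivial]
      ring
    rw [e] at h1
    have : s * (φ m + α * ‖m - c‖ ^ 2 + (1 - s) * (α * ‖y - m‖ ^ 2))
        ≤ s * (φ y + α * ‖y - c‖ ^ 2) := by
      linarith
    exact le_of_mul_le_mul_left this hs0
  have hB : 0 ≤ α * ‖y - m‖ ^ 2 := by positivity
  generalize α * ‖y - m‖ ^ 2 = B at *
  generalize φ m + α * ‖m - c‖ ^ 2 = A at *
  generalize φ y + α * ‖y - c‖ ^ 2 = C at *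
  by_contra hcon
  push Not at hcon
  obtain ⟨d, hd⟩ : ∃ d, d = A + B - C := ⟨_, rfl⟩
  have hdpos : 0 < d := by linarith
  have hk := key (d / (2 * (d + B))) (by positivity) (by rw [div_lt_one (by positivity)]; linarith)
  have : d / (2 * (d + B)) * B ≤ d / 2 := by
    rw [div_mul_eq_mul_div, div_le_div_iff₀ (by positivity) (by positivity)]
    nlinarith
  linarith

/-- Regret-plus-anytime-penalty bound for the COCO-Soft
iteration: if `Q 1 = 0` and there is `M^ε ∈ 𝓜` with `h(M^ε) ≤ 0` and
`g_t(M^ε) + ε ≤ 0` for all `t ∈ {1,…,T}`, then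
`Σ_{t=1}^T (f_t(M_t) − f_t(M^ε)) + (η/V) Σ_{t=1}^T h⁺(M_{t+1})
  ≤ T V L²/(4α) + 2 T ν_max²/V + α D²/V` with `ν_max = E₀ + L D + ε`. -/
theorem stmt10 {EH : Type*} [NormedAddCommGroup EH] [InnerProductSpace ℝ EH]
    [FiniteDimensional ℝ EH]
    (Mset : Set EH) (hMset : Convex ℝ Mset) (D : ℝ)
    (hD : ∀ x ∈ Mset, ∀ y ∈ Mset, ‖x - y‖ ≤ D)
    (T : ℕ) (f g : ℕ → EH → ℝ) (h : EH → ℝ) (L E₀ : ℝ)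
    (hf_conv : ∀ t ∈ Finset.Icc 1 T, ConvexOn ℝ Set.univ (f t))
    (hf_diff : ∀ t ∈ Finset.Icc 1 T, Differentiable ℝ (f t))
    (hf_grad : ∀ t ∈ Finset.Icc 1 T, ∀ x ∈ Mset, ‖gradient (f t) x‖ ≤ L)
    (hg_conv : ∀ t ∈ Finset.Icc 1 T, ConvexOn ℝ Set.univ (g t))
    (hg_diff : ∀ t ∈ Finset.Icc 1 T, Differentiable ℝ (g t))
    (hg_grad : ∀ t ∈ Finset.Icc 1 T, ∀ x ∈ Mset, ‖gradient (g t) x‖ ≤ L)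
    (hg_bdd : ∀ t ∈ Finset.Icc 1 T, ∀ x ∈ Mset, |g t x| ≤ E₀)
    (hh_conv : ConvexOn ℝ Set.univ h)
    (V η α ε : ℝ) (hV : 0 < V) (hη : 0 < η) (hα : 0 < α) (hε : 0 ≤ ε)
    (M : ℕ → EH) (Q : ℕ → ℝ)
    (hM1 : M 1 ∈ Mset) (hQ1 : Q 1 = 0)
    (hMmem : ∀ t : ℕ, 1 ≤ t → M (t + 1) ∈ Mset)
    (hMmin : ∀ t : ℕ, 1 ≤ t → ∀ y ∈ Mset,
      V * ⟪M (t + 1) - M t, gradient (f t) (M t)⟫ +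
          Q t * ⟪M (t + 1) - M t, gradient (g t) (M t)⟫ +
          η * max (h (M (t + 1))) 0 + α * ‖M (t + 1) - M t‖ ^ 2 ≤
        V * ⟪y - M t, gradient (f t) (M t)⟫ +
          Q t * ⟪y - M t, gradient (g t) (M t)⟫ +
          η * max (h y) 0 + α * ‖y - M t‖ ^ 2)
    (hQrec : ∀ t : ℕ, 1 ≤ t →
      Q (t + 1) =
        max (Q t + g t (M t) + ⟪M (t + 1) - M t, gradient (g t) (M t)⟫ + ε) 0)
    (Meps : EH) (hMeps : Meps ∈ Mset) (hMeps_h : h Meps ≤ 0)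
    (hMeps_g : ∀ t ∈ Finset.Icc 1 T, g t Meps + ε ≤ 0) :
    (∑ t ∈ Finset.Icc 1 T, (f t (M t) - f t Meps)) +
        (η / V) * ∑ t ∈ Finset.Icc 1 T, max (h (M (t + 1))) 0 ≤
      (T : ℝ) * V * L ^ 2 / (4 * α) + 2 * (T : ℝ) * (E₀ + L * D + ε) ^ 2 / V +
        α * D ^ 2 / V := by
  have hMm : ∀ t : ℕ, 1 ≤ t → M t ∈ Mset := by
    intro t ht
    rcases Nat.exists_eq_add_of_le' ht with ⟨k, rfl⟩
    rcases Nat.eq_zero_or_pos k with rfl | hk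
    · simpa using hM1
    · exact hMmem k hk
  have hQ0 : ∀ t : ℕ, 1 ≤ t → 0 ≤ Q t := by
    intro t ht
    rcases Nat.exists_eq_add_of_le' ht with ⟨k, rfl⟩
    rcases Nat.eq_zero_or_pos k with rfl | hk
    · simp [hQ1]
    · rw [hQrec k hk]; exact le_max_right _ _
  have step : ∀ t ∈ Finset.Icc 1 T,
      V * (f t (M t) - f t Meps) + η * max (h (M (t + 1))) 0
        + (Q (t + 1) ^ 2 / 2 + α * ‖Meps - M (t + 1)‖ ^ 2)
        - (Q t ^ 2 / 2 + α * ‖Meps - M t‖ ^ 2)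
      ≤ V ^ 2 * L ^ 2 / (4 * α) + (E₀ + L * D + ε) ^ 2 / 2 := by
    intro t ht
    have ht1 : 1 ≤ t := (Finset.mem_Icc.mp ht).1
    have hφ : ConvexOn ℝ Set.univ (fun y : EH => V * ⟪y - M t, gradient (f t) (M t)⟫ +
          Q t * ⟪y - M t, gradient (g t) (M t)⟫ + η * max (h y) 0) := by
      refine ⟨convex_univ, ?_⟩
      intro a _ b _ p q hp hq hpq
      have h1 := (hh_conv.sup (convexOn_const (0:ℝ) convex_univ)).2
        (Set.mem_univ a) (Set.mem_univ b) hp hq hpq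
      simp only [Pi.sup_apply, smul_eq_mul] at h1
      have h2 := mul_le_mul_of_nonneg_left h1 hη.le
      have e : p • a + q • b - M t = p • (a - M t) + q • (b - M t) := by
        have : p = 1 - q := by linarith
        subst this
        module
      simp only [e, inner_add_left, inner_smul_left, conj_trivial, smul_eq_mul]
      linarith
    have hs := aux_strong Mset hMset _ hφ (M t) (M (t + 1)) (hMmem t ht1) α hα
      (hMmin t ht1) Meps hMeps
    simp only [max_eq_right hMeps_h] at hs
    have hf1 := aux_first_order (f t) (hf_conv t ht) (hf_diff t ht) (M t) Meps
    have hg1 := aux_first_order (g t) (hg_conv t ht) (hg_diff t ht) (M t) Meps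
    have hg2 := hMeps_g t ht
    have hQt := hQ0 t ht1
    have hgQ : Q t * (g t (M t) + ⟪Meps - M t, gradient (g t) (M t)⟫ + ε) ≤ 0 :=
      mul_nonpos_of_nonneg_of_nonpos hQt (by linarith)
    have hfV := mul_le_mul_of_nonneg_left hf1 hV.le
    have hif := abs_le.mp (abs_real_inner_le_norm (M (t + 1) - M t) (gradient (f t) (M t)))
    have hig := abs_real_inner_le_norm (M (t + 1) - M t) (gradient (g t) (M t))
    have hLf := hf_grad t ht _ (hMm t ht1)
    have hLg := hg_grad t ht _ (hMm t ht1)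
    have hgb := hg_bdd t ht _ (hMm t ht1)
    have hDt := hD _ (hMmem t ht1) _ (hMm t ht1)
    have hL : 0 ≤ L := (norm_nonneg _).trans hLf
    have hyoung : -(V ^ 2 * L ^ 2 / (4 * α)) ≤
        V * ⟪M (t + 1) - M t, gradient (f t) (M t)⟫ + α * ‖M (t + 1) - M t‖ ^ 2 := by
      have h1 : -(‖M (t + 1) - M t‖ * L) ≤ ⟪M (t + 1) - M t, gradient (f t) (M t)⟫ := by
        have := mul_le_mul_of_nonneg_left hLf (norm_nonneg (M (t + 1) - M t))
        linarith [hif.1]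
      have h2 := mul_le_mul_of_nonneg_left h1 hV.le
      have h3 : V ^ 2 * L ^ 2 / (4 * α) - V * (‖M (t + 1) - M t‖ * L)
          + α * ‖M (t + 1) - M t‖ ^ 2
          = (V * L - 2 * α * ‖M (t + 1) - M t‖) ^ 2 / (4 * α) := by
        field_simp
        ring
      have h4 : 0 ≤ (V * L - 2 * α * ‖M (t + 1) - M t‖) ^ 2 / (4 * α) := by positivity
      linarith
    have hw : |g t (M t) + ⟪M (t + 1) - M t, gradient (g t) (M t)⟫ + ε| ≤ E₀ + L * D + ε := by
      have h1 : ‖M (t + 1) - M t‖ * ‖gradient (g t) (M t)‖ ≤ D * L :=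
        mul_le_mul hDt hLg (norm_nonneg _) ((norm_nonneg _).trans hDt)
      refine (abs_add_le _ _).trans ?_
      have := abs_add_le (g t (M t)) ⟪M (t + 1) - M t, gradient (g t) (M t)⟫
      rw [abs_of_nonneg hε]
      linarith
    have hw2 := sq_le_sq.mpr (hw.trans (le_abs_self _))
    have hQ2 : Q (t + 1) ^ 2 ≤
        (Q t + (g t (M t) + ⟪M (t + 1) - M t, gradient (g t) (M t)⟫ + ε)) ^ 2 := by
      rw [hQrec t ht1]
      have e : Q t + g t (M t) + ⟪M (t + 1) - M t, gradient (g t) (M t)⟫ + ε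
        = Q t + (g t (M t) + ⟪M (t + 1) - M t, gradient (g t) (M t)⟫ + ε) := by ring
      rw [e]
      rcases max_cases (Q t + (g t (M t) + ⟪M (t + 1) - M t, gradient (g t) (M t)⟫ + ε)) 0
        with ⟨h1, _⟩ | ⟨h1, _⟩
      · rw [h1]
      · rw [h1]; nlinarith [sq_nonneg (Q t + (g t (M t) + ⟪M (t + 1) - M t, gradient (g t) (M t)⟫ + ε))]
    rw [add_sq] at hQ2
    linarith
  have hsum := Finset.sum_le_sum step
  have htel : ∀ n : ℕ, ∑ t ∈ Finset.Icc 1 n,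
      ((Q (t + 1) ^ 2 / 2 + α * ‖Meps - M (t + 1)‖ ^ 2)
        - (Q t ^ 2 / 2 + α * ‖Meps - M t‖ ^ 2))
      = (Q (n + 1) ^ 2 / 2 + α * ‖Meps - M (n + 1)‖ ^ 2)
        - (Q 1 ^ 2 / 2 + α * ‖Meps - M 1‖ ^ 2) := by
    intro n
    induction n with
    | zero => simp
    | succ k ih => rw [Finset.sum_Icc_succ_top (by omega), ih]; ring
  have hT := htel T
  simp only [add_sub_assoc, Finset.sum_add_distrib, ← Finset.mul_sum, Finset.sum_const,
    Nat.card_Icc, Nat.add_sub_cancel, nsmul_eq_mul] at hsum hT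
  rw [hT, hQ1] at hsum
  have hD1 : ‖Meps - M 1‖ ^ 2 ≤ D ^ 2 :=
    pow_le_pow_left₀ (norm_nonneg _) (hD _ hMeps _ hM1) 2
  have hD2 := mul_le_mul_of_nonneg_left hD1 hα.le
  have hp1 : 0 ≤ α * ‖Meps - M (T + 1)‖ ^ 2 := by positivity
  have hp2 : 0 ≤ (T : ℝ) * (E₀ + L * D + ε) ^ 2 := by positivity
  have hp3 : 0 ≤ Q (T + 1) ^ 2 := by positivity
  have hfin : V * ((∑ t ∈ Finset.Icc 1 T, (f t (M t) - f t Meps)) +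
        (η / V) * ∑ t ∈ Finset.Icc 1 T, max (h (M (t + 1))) 0) ≤
      V * ((T : ℝ) * V * L ^ 2 / (4 * α) + 2 * (T : ℝ) * (E₀ + L * D + ε) ^ 2 / V +
        α * D ^ 2 / V) := by
    have e1 : V * ((∑ t ∈ Finset.Icc 1 T, (f t (M t) - f t Meps)) +
        (η / V) * ∑ t ∈ Finset.Icc 1 T, max (h (M (t + 1))) 0)
        = V * (∑ t ∈ Finset.Icc 1 T, (f t (M t) - f t Meps)) +
        η * ∑ t ∈ Finset.Icc 1 T, max (h (M (t + 1))) 0 := by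
      field_simp
    have e2 : V * ((T : ℝ) * V * L ^ 2 / (4 * α) + 2 * (T : ℝ) * (E₀ + L * D + ε) ^ 2 / V +
        α * D ^ 2 / V) = (T : ℝ) * (V ^ 2 * L ^ 2 / (4 * α))
          + 2 * ((T : ℝ) * (E₀ + L * D + ε) ^ 2) + α * D ^ 2 := by
      field_simp
    rw [e1, e2]
    linarith
  exact le_of_mul_le_mul_left hfin hV
end

section
/- Consider the COCO-Soft iteration with Q_1 = 0. Then Σ_{t=1}^{T} g_t(M_t) ≤ Q_{T+1} + L Σ_{t=1}^{T} ‖M_{t+1} − M_t‖ − T ε. -/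
open scoped RealInnerProductSpace

/-- Soft-violation decomposition for the COCO-Soft iteration
with `Q 1 = 0`:
`Σ_{t=1}^T g_t(M_t) ≤ Q_{T+1} + L Σ_{t=1}^T ‖M_{t+1} − M_t‖ − T ε`. -/
theorem stmt11 {EH : Type*} [NormedAddCommGroup EH] [InnerProductSpace ℝ EH]
    [FiniteDimensional ℝ EH]
    (Mset : Set EH) (hMset : Convex ℝ Mset) (D : ℝ)
    (hD : ∀ x ∈ Mset, ∀ y ∈ Mset, ‖x - y‖ ≤ D)
    (T : ℕ) (f g : ℕ → EH → ℝ) (h : EH → ℝ) (L E₀ : ℝ)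
    (hf_conv : ∀ t ∈ Finset.Icc 1 T, ConvexOn ℝ Set.univ (f t))
    (hf_diff : ∀ t ∈ Finset.Icc 1 T, Differentiable ℝ (f t))
    (hf_grad : ∀ t ∈ Finset.Icc 1 T, ∀ x ∈ Mset, ‖gradient (f t) x‖ ≤ L)
    (hg_conv : ∀ t ∈ Finset.Icc 1 T, ConvexOn ℝ Set.univ (g t))
    (hg_diff : ∀ t ∈ Finset.Icc 1 T, Differentiable ℝ (g t))
    (hg_grad : ∀ t ∈ Finset.Icc 1 T, ∀ x ∈ Mset, ‖gradient (g t) x‖ ≤ L)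
    (hg_bdd : ∀ t ∈ Finset.Icc 1 T, ∀ x ∈ Mset, |g t x| ≤ E₀)
    (hh_conv : ConvexOn ℝ Set.univ h)
    (V η α ε : ℝ) (hV : 0 < V) (hη : 0 < η) (hα : 0 < α) (hε : 0 ≤ ε)
    (M : ℕ → EH) (Q : ℕ → ℝ)
    (hM1 : M 1 ∈ Mset) (hQ1 : Q 1 = 0)
    (hMmem : ∀ t : ℕ, 1 ≤ t → M (t + 1) ∈ Mset)
    (hMmin : ∀ t : ℕ, 1 ≤ t → ∀ y ∈ Mset,
      V * ⟪M (t + 1) - M t, gradient (f t) (M t)⟫ +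
          Q t * ⟪M (t + 1) - M t, gradient (g t) (M t)⟫ +
          η * max (h (M (t + 1))) 0 + α * ‖M (t + 1) - M t‖ ^ 2 ≤
        V * ⟪y - M t, gradient (f t) (M t)⟫ +
          Q t * ⟪y - M t, gradient (g t) (M t)⟫ +
          η * max (h y) 0 + α * ‖y - M t‖ ^ 2)
    (hQrec : ∀ t : ℕ, 1 ≤ t →
      Q (t + 1) =
        max (Q t + g t (M t) + ⟪M (t + 1) - M t, gradient (g t) (M t)⟫ + ε) 0) :
    ∑ t ∈ Finset.Icc 1 T, g t (M t) ≤
      Q (T + 1) + L * ∑ t ∈ Finset.Icc 1 T, ‖M (t + 1) - M t‖ - (T : ℝ) * ε := by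
  have hmem : ∀ t : ℕ, 1 ≤ t → M t ∈ Mset := by
    intro t ht
    obtain rfl | ht' := Nat.eq_or_lt_of_le ht
    · exact hM1
    · have := hMmem (t - 1) (by omega)
      rwa [Nat.sub_add_cancel ht] at this
  have key : ∀ n : ℕ, n ≤ T → ∑ t ∈ Finset.Icc 1 n, g t (M t) ≤
      Q (n + 1) + L * ∑ t ∈ Finset.Icc 1 n, ‖M (t + 1) - M t‖ - (n : ℝ) * ε := by
    intro n
    induction n with
    | zero => intro _; simp [hQ1]
    | succ k ih =>
      intro hk
      have ih' := ih (by omega)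
      have hq := hQrec (k + 1) (by omega)
      have hmax := le_max_left (Q (k + 1) + g (k + 1) (M (k + 1)) +
        ⟪M (k + 1 + 1) - M (k + 1), gradient (g (k + 1)) (M (k + 1))⟫ + ε) 0
      rw [← hq] at hmax
      have hgr := hg_grad (k + 1) (Finset.mem_Icc.2 ⟨by omega, hk⟩) _
        (hmem (k + 1) (by omega))
      have h1 := abs_real_inner_le_norm (M (k + 1 + 1) - M (k + 1))
        (gradient (g (k + 1)) (M (k + 1)))
      have h2 := mul_le_mul_of_nonneg_left hgr (norm_nonneg (M (k + 1 + 1) - M (k + 1)))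
      have h3 := (abs_le.1 h1).1
      rw [Finset.sum_Icc_succ_top (by omega), Finset.sum_Icc_succ_top (by omega)]
      push_cast
      linarith
  exact key T le_rfl
end

section
/- Consider the COCO-Soft iteration with Q_1 = 0. Suppose there exists M̂ ∈ M with h(M̂) ≤ 0. Then for every t ∈ {1,…,T}, h⁺(M_{t+1}) ≤ ((V + Q_t) L D + α D²) / η. -/
open scoped RealInnerProductSpace

/-- Anytime-violation bound for the COCO-Soft iteration with
`Q 1 = 0`: if some `M̂ ∈ 𝓜` satisfies `h(M̂) ≤ 0`, then for every `t ∈ {1,…,T}`,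
`h⁺(M_{t+1}) ≤ ((V + Q_t) L D + α D²)/η`. -/
theorem stmt12 {EH : Type*} [NormedAddCommGroup EH] [InnerProductSpace ℝ EH]
    [FiniteDimensional ℝ EH]
    (Mset : Set EH) (hMset : Convex ℝ Mset) (D : ℝ)
    (hD : ∀ x ∈ Mset, ∀ y ∈ Mset, ‖x - y‖ ≤ D)
    (T : ℕ) (f g : ℕ → EH → ℝ) (h : EH → ℝ) (L E₀ : ℝ)
    (hf_conv : ∀ t ∈ Finset.Icc 1 T, ConvexOn ℝ Set.univ (f t))
    (hf_diff : ∀ t ∈ Finset.Icc 1 T, Differentiable ℝ (f t))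
    (hf_grad : ∀ t ∈ Finset.Icc 1 T, ∀ x ∈ Mset, ‖gradient (f t) x‖ ≤ L)
    (hg_conv : ∀ t ∈ Finset.Icc 1 T, ConvexOn ℝ Set.univ (g t))
    (hg_diff : ∀ t ∈ Finset.Icc 1 T, Differentiable ℝ (g t))
    (hg_grad : ∀ t ∈ Finset.Icc 1 T, ∀ x ∈ Mset, ‖gradient (g t) x‖ ≤ L)
    (hg_bdd : ∀ t ∈ Finset.Icc 1 T, ∀ x ∈ Mset, |g t x| ≤ E₀)
    (hh_conv : ConvexOn ℝ Set.univ h)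
    (V η α ε : ℝ) (hV : 0 < V) (hη : 0 < η) (hα : 0 < α) (hε : 0 ≤ ε)
    (M : ℕ → EH) (Q : ℕ → ℝ)
    (hM1 : M 1 ∈ Mset) (hQ1 : Q 1 = 0)
    (hMmem : ∀ t : ℕ, 1 ≤ t → M (t + 1) ∈ Mset)
    (hMmin : ∀ t : ℕ, 1 ≤ t → ∀ y ∈ Mset,
      V * ⟪M (t + 1) - M t, gradient (f t) (M t)⟫ +
          Q t * ⟪M (t + 1) - M t, gradient (g t) (M t)⟫ +
          η * max (h (M (t + 1))) 0 + α * ‖M (t + 1) - M t‖ ^ 2 ≤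
        V * ⟪y - M t, gradient (f t) (M t)⟫ +
          Q t * ⟪y - M t, gradient (g t) (M t)⟫ +
          η * max (h y) 0 + α * ‖y - M t‖ ^ 2)
    (hQrec : ∀ t : ℕ, 1 ≤ t →
      Q (t + 1) =
        max (Q t + g t (M t) + ⟪M (t + 1) - M t, gradient (g t) (M t)⟫ + ε) 0)
    (Mhat : EH) (hMhat : Mhat ∈ Mset) (hMhat_h : h Mhat ≤ 0) :
    ∀ t ∈ Finset.Icc 1 T,
      max (h (M (t + 1))) 0 ≤ ((V + Q t) * L * D + α * D ^ 2) / η := by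
  intro t ht
  have h1 : 1 ≤ t := (Finset.mem_Icc.mp ht).1
  have hMt : M t ∈ Mset := by
    obtain ⟨k, rfl⟩ : ∃ k, t = k + 1 := ⟨t - 1, by omega⟩
    rcases Nat.eq_zero_or_pos k with rfl | hk
    · exact hM1
    · exact hMmem k hk
  have hQ : 0 ≤ Q t := by
    obtain ⟨k, rfl⟩ : ∃ k, t = k + 1 := ⟨t - 1, by omega⟩
    rcases Nat.eq_zero_or_pos k with rfl | hk
    · exact hQ1.ge
    · rw [hQrec k hk]; exact le_max_right _ _
  have hD0 : 0 ≤ D := (norm_nonneg _).trans (hD _ hMt _ hMt)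
  have key : ∀ v : EH, ‖v‖ ≤ L →
      ⟪Mhat - M t, v⟫ - ⟪M (t + 1) - M t, v⟫ ≤ L * D := by
    intro v hv
    rw [← inner_sub_left, sub_sub_sub_cancel_right, mul_comm L D]
    exact (real_inner_le_norm _ _).trans
      (mul_le_mul (hD _ hMhat _ (hMmem t h1)) hv (norm_nonneg _) hD0)
  have kf := mul_le_mul_of_nonneg_left (key _ (hf_grad t ht _ hMt)) hV.le
  have kg := mul_le_mul_of_nonneg_left (key _ (hg_grad t ht _ hMt)) hQ
  have hm := hMmin t h1 Mhat hMhat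
  rw [max_eq_right hMhat_h] at hm
  have hn : α * ‖Mhat - M t‖ ^ 2 ≤ α * D ^ 2 :=
    mul_le_mul_of_nonneg_left
      (pow_le_pow_left₀ (norm_nonneg _) (hD _ hMhat _ hMt) 2) hα.le
  have hp : 0 ≤ α * ‖M (t + 1) - M t‖ ^ 2 := by positivity
  rw [le_div_iff₀ hη]
  linarith
end

section
/- Consider the COCO-Hard iteration. Then for every t ∈ {1,…,T} and every M ∈ M with g_t(M) ≤ 0 and h(M) ≤ 0: γ g_t⁺(M_{t+1}) + η h⁺(M_{t+1}) + α‖M_{t+1} − M_t‖² ≤ 2 V L D + α‖M − M_t‖² − α‖M − M_{t+1}‖². -/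
open scoped RealInnerProductSpace

/-- Per-step key inequality for the COCO-Hard iteration: for
every `t ∈ {1,…,T}` and every feasible `M ∈ 𝓜` (with `g_t(M) ≤ 0`, `h(M) ≤ 0`),
`γ g_t⁺(M_{t+1}) + η h⁺(M_{t+1}) + α‖M_{t+1} − M_t‖²
  ≤ 2 V L D + α‖M − M_t‖² − α‖M − M_{t+1}‖²`. -/
theorem stmt14 {EH : Type*} [NormedAddCommGroup EH] [InnerProductSpace ℝ EH]
    [FiniteDimensional ℝ EH]
    (Mset : Set EH) (hMset : Convex ℝ Mset) (D : ℝ)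
    (hD : ∀ x ∈ Mset, ∀ y ∈ Mset, ‖x - y‖ ≤ D)
    (T : ℕ) (f g : ℕ → EH → ℝ) (h : EH → ℝ) (L : ℝ)
    (hf_conv : ∀ t ∈ Finset.Icc 1 T, ConvexOn ℝ Set.univ (f t))
    (hf_diff : ∀ t ∈ Finset.Icc 1 T, Differentiable ℝ (f t))
    (hf_grad : ∀ t ∈ Finset.Icc 1 T, ∀ x ∈ Mset, ‖gradient (f t) x‖ ≤ L)
    (hg_conv : ∀ t ∈ Finset.Icc 1 T, ConvexOn ℝ Set.univ (g t))
    (hh_conv : ConvexOn ℝ Set.univ h)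
    (V γ η α : ℝ) (hV : 0 < V) (hγ : 0 < γ) (hη : 0 < η) (hα : 0 < α)
    (M : ℕ → EH)
    (hM1 : M 1 ∈ Mset)
    (hMmem : ∀ t : ℕ, 1 ≤ t → M (t + 1) ∈ Mset)
    (hMmin : ∀ t : ℕ, 1 ≤ t → ∀ y ∈ Mset,
      V * ⟪M (t + 1) - M t, gradient (f t) (M t)⟫ + γ * max (g t (M (t + 1))) 0 +
          η * max (h (M (t + 1))) 0 + α * ‖M (t + 1) - M t‖ ^ 2 ≤
        V * ⟪y - M t, gradient (f t) (M t)⟫ + γ * max (g t y) 0 +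
          η * max (h y) 0 + α * ‖y - M t‖ ^ 2) :
    ∀ t ∈ Finset.Icc 1 T, ∀ y ∈ Mset, g t y ≤ 0 → h y ≤ 0 →
      γ * max (g t (M (t + 1))) 0 + η * max (h (M (t + 1))) 0 +
          α * ‖M (t + 1) - M t‖ ^ 2 ≤
        2 * V * L * D + α * ‖y - M t‖ ^ 2 - α * ‖y - M (t + 1)‖ ^ 2 := by
  intro t ht y hy hgy hhy
  have ht1 : 1 ≤ t := (Finset.mem_Icc.mp ht).1
  have hQ := hMmem t ht1
  have hP : M t ∈ Mset := by
    obtain ⟨k, rfl⟩ : ∃ k, t = k + 1 := ⟨t - 1, by omega⟩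
    rcases Nat.eq_zero_or_pos k with rfl | hk
    · exact hM1
    · exact hMmem k hk
  have hmin := hMmin t ht1
  have hgc := hg_conv t ht
  have hG := hf_grad t ht _ hP
  generalize M (t + 1) = Q at *
  generalize M t = P at *
  generalize gradient (f t) P = G at *
  have hmax : ∀ φ : EH → ℝ, ConvexOn ℝ Set.univ φ → φ y ≤ 0 → ∀ s : ℝ, 0 < s → s ≤ 1 →
      max (φ ((1 - s) • Q + s • y)) 0 ≤ (1 - s) * max (φ Q) 0 := by
    intro φ hφ hy0 s hs hs1
    have h1 := hφ.2 (Set.mem_univ Q) (Set.mem_univ y) (by linarith : 0 ≤ 1 - s) hs.le (by ring)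
    simp only [smul_eq_mul] at h1
    have h2 : (1 - s) * φ Q ≤ (1 - s) * max (φ Q) 0 :=
      mul_le_mul_of_nonneg_left (le_max_left _ _) (by linarith)
    have h3 : 0 ≤ (1 - s) * max (φ Q) 0 :=
      mul_nonneg (by linarith) (le_max_right _ _)
    refine max_le ?_ h3
    nlinarith
  have key : ∀ s : ℝ, 0 < s → s ≤ 1 →
      V * ⟪Q - P, G⟫ + γ * max (g t Q) 0 + η * max (h Q) 0 + α * ‖Q - P‖ ^ 2
        - V * ⟪y - P, G⟫ - α * ‖y - P‖ ^ 2 + α * ‖y - Q‖ ^ 2 ≤ s * (α * ‖y - Q‖ ^ 2) := by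
    intro s hs hs1
    have hz : (1 - s) • Q + s • y ∈ Mset := hMset hQ hy (by linarith) hs.le (by ring)
    have h1 := hmin _ hz
    have h2 := mul_le_mul_of_nonneg_left (hmax (g t) hgc hgy s hs hs1) hγ.le
    have h3 := mul_le_mul_of_nonneg_left (hmax h hh_conv hhy s hs hs1) hη.le
    have e : (1 - s) • Q + s • y - P = (1 - s) • (Q - P) + s • (y - P) := by module
    have e2 : y - Q = (y - P) - (Q - P) := by abel
    have hn : ‖(1 - s) • Q + s • y - P‖ ^ 2
        = (1 - s) * ‖Q - P‖ ^ 2 + s * ‖y - P‖ ^ 2 - s * (1 - s) * ‖y - Q‖ ^ 2 := by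
      rw [e, e2, norm_sub_sq_real (y - P) (Q - P), norm_add_sq_real, norm_smul, norm_smul, mul_pow, mul_pow,
        Real.norm_eq_abs, Real.norm_eq_abs, sq_abs, sq_abs, real_inner_smul_left,
        real_inner_smul_right, real_inner_comm (y - P) (Q - P)]
      ring
    have hi : ⟪(1 - s) • Q + s • y - P, G⟫ = (1 - s) * ⟪Q - P, G⟫ + s * ⟪y - P, G⟫ := by
      rw [e, inner_add_left, real_inner_smul_left, real_inner_smul_left]
    rw [hn, hi] at h1
    refine le_of_mul_le_mul_left ?_ hs
    nlinarith
  have lim : V * ⟪Q - P, G⟫ + γ * max (g t Q) 0 + η * max (h Q) 0 + α * ‖Q - P‖ ^ 2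
        - V * ⟪y - P, G⟫ - α * ‖y - P‖ ^ 2 + α * ‖y - Q‖ ^ 2 ≤ 0 := by
    generalize V * ⟪Q - P, G⟫ + γ * max (g t Q) 0 + η * max (h Q) 0 + α * ‖Q - P‖ ^ 2
        - V * ⟪y - P, G⟫ - α * ‖y - P‖ ^ 2 + α * ‖y - Q‖ ^ 2 = X at key
    generalize α * ‖y - Q‖ ^ 2 = C at key
    by_contra! hX
    have h1 := key 1 one_pos le_rfl
    have hC : 0 < C := by linarith
    have h2 := key (X / (2 * C)) (by positivity) (by rw [div_le_one (by positivity)]; linarith)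
    have : X / (2 * C) * C = X / 2 := by field_simp
    linarith
  have hL : 0 ≤ L := (norm_nonneg _).trans hG
  have hD' := hD y hy Q hQ
  have hD0 : 0 ≤ D := (norm_nonneg _).trans hD'
  have hin : ⟪y - P, G⟫ - ⟪Q - P, G⟫ ≤ L * D := by
    rw [← inner_sub_left, sub_sub_sub_cancel_right]
    calc ⟪y - Q, G⟫ ≤ ‖y - Q‖ * ‖G‖ := real_inner_le_norm _ _
      _ ≤ D * L := mul_le_mul hD' hG (norm_nonneg _) hD0
      _ = L * D := mul_comm _ _
  have h4 := mul_le_mul_of_nonneg_left hin hV.le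
  have h5 : 0 ≤ V * (L * D) := by positivity
  linarith
end

section
/- Consider the COCO-Hard iteration, and suppose there exists M ∈ M with g_t(M) ≤ 0 for every t ∈ {1,…,T} and h(M) ≤ 0. Then the following three bounds hold: Σ_{t=1}^{T} g_t⁺(M_{t+1}) ≤ (2 T V L D + α D²)/γ, Σ_{t=1}^{T} h⁺(M_{t+1}) ≤ (2 T V L D + α D²)/η, and Σ_{t=1}^{T} ‖M_{t+1} − M_t‖² ≤ (2 T V L D + α D²)/α. -/
open scoped RealInnerProductSpace

theorem three_point_aux {EH : Type*} [NormedAddCommGroup EH] [InnerProductSpace ℝ EH]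
    (S : Set EH) (hS : Convex ℝ S) (φ : EH → ℝ) (hφ : ConvexOn ℝ Set.univ φ) (α : ℝ) (hα : 0 < α)
    (m p : EH) (hp : p ∈ S)
    (hmin : ∀ y ∈ S, φ p + α * ‖p - m‖ ^ 2 ≤ φ y + α * ‖y - m‖ ^ 2) (y : EH) (hy : y ∈ S) :
    φ p + α * ‖p - m‖ ^ 2 + α * ‖y - p‖ ^ 2 ≤ φ y + α * ‖y - m‖ ^ 2 := by
  have key : ∀ l : ℝ, 0 < l → l < 1 →
      φ p + α * ‖p - m‖ ^ 2 + (1 - l) * (α * ‖y - p‖ ^ 2) ≤ φ y + α * ‖y - m‖ ^ 2 := by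
    intro l h0 h1
    have hz := hmin _ (hS hp hy (sub_nonneg.2 h1.le) h0.le (by ring))
    have hc := hφ.2 (Set.mem_univ p) (Set.mem_univ y) (sub_nonneg.2 h1.le) h0.le (by ring)
    have hn : ‖((1 - l) • p + l • y) - m‖ ^ 2
        = (1 - l) * ‖p - m‖ ^ 2 + l * ‖y - m‖ ^ 2 - l * (1 - l) * ‖y - p‖ ^ 2 := by
      have e1 : ((1 - l) • p + l • y) - m = (1 - l) • (p - m) + l • (y - m) := by module
      have e2 : y - p = (y - m) - (p - m) := by abel
      rw [e1, e2, norm_add_sq_real, norm_sub_sq_real (y - m) (p - m), norm_smul, norm_smul, mul_pow, mul_pow,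
        Real.norm_eq_abs, Real.norm_eq_abs, sq_abs, sq_abs, real_inner_smul_left,
        real_inner_smul_right, real_inner_comm (y - m) (p - m)]
      ring
    rw [hn] at hz
    simp only [smul_eq_mul] at hc
    refine le_of_mul_le_mul_left ?_ h0
    nlinarith
  by_contra hcon
  push Not at hcon
  have hc0 : 0 ≤ α * ‖y - p‖ ^ 2 := by positivity
  generalize α * ‖y - p‖ ^ 2 = c at *
  generalize φ p + α * ‖p - m‖ ^ 2 = A at *
  generalize φ y + α * ‖y - m‖ ^ 2 = B at *
  have hd : 0 < A + c - B := by linarith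
  have hs : 0 < c + (A + c - B) := by linarith
  have hl := key ((A + c - B) / (2 * (c + (A + c - B)))) (by positivity)
    (by rw [div_lt_one (by positivity)]; linarith)
  have : (A + c - B) / (2 * (c + (A + c - B))) * c < A + c - B := by
    rw [div_mul_eq_mul_div, div_lt_iff₀ (by positivity)]
    nlinarith [mul_pos hd hd, mul_nonneg hd.le hc0]
  linarith

/-- Violation and stability bounds for the COCO-Hard
iteration: if some `M ∈ 𝓜` satisfies `g_t(M) ≤ 0` for all `t ∈ {1,…,T}` and
`h(M) ≤ 0`, then `Σ_{t=1}^T g_t⁺(M_{t+1}) ≤ (2 T V L D + α D²)/γ`,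
`Σ_{t=1}^T h⁺(M_{t+1}) ≤ (2 T V L D + α D²)/η`, and
`Σ_{t=1}^T ‖M_{t+1} − M_t‖² ≤ (2 T V L D + α D²)/α`. -/
theorem stmt16 {EH : Type*} [NormedAddCommGroup EH] [InnerProductSpace ℝ EH]
    [FiniteDimensional ℝ EH]
    (Mset : Set EH) (hMset : Convex ℝ Mset) (D : ℝ)
    (hD : ∀ x ∈ Mset, ∀ y ∈ Mset, ‖x - y‖ ≤ D)
    (T : ℕ) (f g : ℕ → EH → ℝ) (h : EH → ℝ) (L : ℝ)
    (hf_conv : ∀ t ∈ Finset.Icc 1 T, ConvexOn ℝ Set.univ (f t))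
    (hf_diff : ∀ t ∈ Finset.Icc 1 T, Differentiable ℝ (f t))
    (hf_grad : ∀ t ∈ Finset.Icc 1 T, ∀ x ∈ Mset, ‖gradient (f t) x‖ ≤ L)
    (hg_conv : ∀ t ∈ Finset.Icc 1 T, ConvexOn ℝ Set.univ (g t))
    (hh_conv : ConvexOn ℝ Set.univ h)
    (V γ η α : ℝ) (hV : 0 < V) (hγ : 0 < γ) (hη : 0 < η) (hα : 0 < α)
    (M : ℕ → EH)
    (hM1 : M 1 ∈ Mset)
    (hMmem : ∀ t : ℕ, 1 ≤ t → M (t + 1) ∈ Mset)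
    (hMmin : ∀ t : ℕ, 1 ≤ t → ∀ y ∈ Mset,
      V * ⟪M (t + 1) - M t, gradient (f t) (M t)⟫ + γ * max (g t (M (t + 1))) 0 +
          η * max (h (M (t + 1))) 0 + α * ‖M (t + 1) - M t‖ ^ 2 ≤
        V * ⟪y - M t, gradient (f t) (M t)⟫ + γ * max (g t y) 0 +
          η * max (h y) 0 + α * ‖y - M t‖ ^ 2)
    (Mfeas : EH) (hMfeas : Mfeas ∈ Mset)
    (hMfeas_g : ∀ t ∈ Finset.Icc 1 T, g t Mfeas ≤ 0) (hMfeas_h : h Mfeas ≤ 0) :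
    (∑ t ∈ Finset.Icc 1 T, max (g t (M (t + 1))) 0 ≤
        (2 * (T : ℝ) * V * L * D + α * D ^ 2) / γ) ∧
      (∑ t ∈ Finset.Icc 1 T, max (h (M (t + 1))) 0 ≤
        (2 * (T : ℝ) * V * L * D + α * D ^ 2) / η) ∧
      ∑ t ∈ Finset.Icc 1 T, ‖M (t + 1) - M t‖ ^ 2 ≤
        (2 * (T : ℝ) * V * L * D + α * D ^ 2) / α := by
  have hmem : ∀ t : ℕ, 1 ≤ t → M t ∈ Mset := by
    intro t ht
    obtain rfl | h2 := Nat.eq_or_lt_of_le ht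
    · exact hM1
    · obtain ⟨k, rfl⟩ := Nat.exists_eq_add_of_le' ht
      exact hMmem k (by omega)
  have hD0 : 0 ≤ D := (norm_nonneg _).trans (hD _ hM1 _ hM1)
  have step : ∀ t ∈ Finset.Icc 1 T,
      γ * max (g t (M (t + 1))) 0 + η * max (h (M (t + 1))) 0 + α * ‖M (t + 1) - M t‖ ^ 2 ≤
        2 * V * L * D + (α * ‖Mfeas - M t‖ ^ 2 - α * ‖Mfeas - M (t + 1)‖ ^ 2) := by
    intro t ht
    have ht1 := (Finset.mem_Icc.1 ht).1
    have hconv : ConvexOn ℝ Set.univ (fun x => V * ⟪x - M t, gradient (f t) (M t)⟫ +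
        γ * max (g t x) 0 + η * max (h x) 0) := by
      refine ConvexOn.add (ConvexOn.add ?_ ?_) ?_
      · refine ⟨convex_univ, fun x _ y _ a b _ _ hab => le_of_eq ?_⟩
        have e : a • x + b • y - M t = a • (x - M t) + b • (y - M t) := by
          obtain rfl : a = 1 - b := by linarith
          module
        simp only [e, inner_add_left, real_inner_smul_left, smul_eq_mul]
        ring
      · exact ((hg_conv t ht).sup (convexOn_const 0 convex_univ)).smul hγ.le
      · exact (hh_conv.sup (convexOn_const 0 convex_univ)).smul hη.le
    have h3 := three_point_aux Mset hMset _ hconv α hα (M t) (M (t + 1)) (hMmem t ht1)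
      (hMmin t ht1) Mfeas hMfeas
    simp only [max_eq_right (hMfeas_g t ht), max_eq_right hMfeas_h] at h3
    have hL := hf_grad t ht _ (hmem t ht1)
    have hL0 : 0 ≤ L := (norm_nonneg _).trans hL
    have hi : ⟪Mfeas - M t, gradient (f t) (M t)⟫ - ⟪M (t + 1) - M t, gradient (f t) (M t)⟫
        ≤ D * L := by
      rw [← inner_sub_left, sub_sub_sub_cancel_right]
      exact (real_inner_le_norm _ _).trans
        (mul_le_mul (hD _ hMfeas _ (hMmem t ht1)) hL (norm_nonneg _) hD0)
    have hi2 := mul_le_mul_of_nonneg_left hi hV.le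
    have hp : 0 ≤ V * (D * L) := by positivity
    linarith
  have tel : ∀ n : ℕ, ∑ t ∈ Finset.Icc 1 n,
      (α * ‖Mfeas - M t‖ ^ 2 - α * ‖Mfeas - M (t + 1)‖ ^ 2) =
      α * ‖Mfeas - M 1‖ ^ 2 - α * ‖Mfeas - M (n + 1)‖ ^ 2 := by
    intro n
    induction n with
    | zero => simp
    | succ k ih => rw [Finset.sum_Icc_succ_top (by omega), ih]; ring
  have tot := Finset.sum_le_sum step
  rw [Finset.sum_add_distrib, Finset.sum_add_distrib, Finset.sum_add_distrib, tel,
    ← Finset.mul_sum, ← Finset.mul_sum, ← Finset.mul_sum, Finset.sum_const, Nat.card_Icc,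
    nsmul_eq_mul, Nat.add_sub_cancel] at tot
  have hn1 : α * ‖Mfeas - M 1‖ ^ 2 ≤ α * D ^ 2 := by
    have := hD _ hMfeas _ hM1
    gcongr
  have hn2 : 0 ≤ α * ‖Mfeas - M (T + 1)‖ ^ 2 := by positivity
  have p1 : 0 ≤ γ * ∑ t ∈ Finset.Icc 1 T, max (g t (M (t + 1))) 0 :=
    mul_nonneg hγ.le (Finset.sum_nonneg fun _ _ => le_max_right _ _)
  have p2 : 0 ≤ η * ∑ t ∈ Finset.Icc 1 T, max (h (M (t + 1))) 0 :=
    mul_nonneg hη.le (Finset.sum_nonneg fun _ _ => le_max_right _ _)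
  have p3 : 0 ≤ α * ∑ t ∈ Finset.Icc 1 T, ‖M (t + 1) - M t‖ ^ 2 :=
    mul_nonneg hα.le (Finset.sum_nonneg fun _ _ => by positivity)
  refine ⟨?_, ?_, ?_⟩
  · rw [le_div_iff₀ hγ]; linarith
  · rw [le_div_iff₀ hη]; linarith
  · rw [le_div_iff₀ hα]; linarith
end

section
/- Consider the COCO-Best2Worlds iteration. Then for every t ∈ {1,…,T} and every M ∈ M: V_t f_t(M_t) + V_t⟨M_{t+1} − M_t, ∇f_t(M_t)⟩ + (1/2)Q_{t+1}² − (1/2)Q_t² + γ_t g_t⁺(M_{t+1}) + η_t h⁺(M_{t+1}) + α_t‖M_{t+1} − M_t‖² ≤ V_t f_t(M) + Q_t(g_t(M) + ε) + ν_max² + γ_t g_t⁺(M) + η_t h⁺(M) + (α_t − λ V_t/2)‖M − M_t‖² − α_t‖M − M_{t+1}‖², where ν_max = E₀ + L D + ε. -/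
open scoped RealInnerProductSpace


theorem aux_min {EH : Type*} [NormedAddCommGroup EH] [InnerProductSpace ℝ EH]
    (S : Set EH) (hS : Convex ℝ S) (φ : EH → ℝ) (hφ : ConvexOn ℝ S φ) (a : ℝ) (ha : 0 < a)
    (c x : EH) (hx : x ∈ S)
    (hmin : ∀ y ∈ S, φ x + a * ‖x - c‖ ^ 2 ≤ φ y + a * ‖y - c‖ ^ 2) (y : EH) (hy : y ∈ S) :
    φ x + a * ‖x - c‖ ^ 2 + a * ‖y - x‖ ^ 2 ≤ φ y + a * ‖y - c‖ ^ 2 := by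
  have key : ∀ θ : ℝ, 0 < θ → θ < 1 →
      φ x + a * ‖x - c‖ ^ 2 + (1 - θ) * (a * ‖y - x‖ ^ 2) ≤ φ y + a * ‖y - c‖ ^ 2 := by
    intro θ h0 h1
    have hz : (1 - θ) • x + θ • y ∈ S := hS hx hy (by linarith) h0.le (by ring)
    have h2 := hmin _ hz
    have h3 := hφ.2 hx hy (by linarith : 0 ≤ 1 - θ) h0.le (by ring)
    simp only [smul_eq_mul] at h3
    have h4 : ‖(1 - θ) • x + θ • y - c‖ ^ 2 =
        (1 - θ) * ‖x - c‖ ^ 2 + θ * ‖y - c‖ ^ 2 - θ * (1 - θ) * ‖y - x‖ ^ 2 := by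
      have e1 : (1 - θ) • x + θ • y - c = (1 - θ) • (x - c) + θ • (y - c) := by module
      have e2 : y - x = (y - c) - (x - c) := by abel
      rw [e1, e2, norm_add_sq_real, norm_sub_sq_real (y - c) (x - c), norm_smul, norm_smul,
        inner_smul_left, inner_smul_right, real_inner_comm (y - c) (x - c), mul_pow, mul_pow,
        Real.norm_eq_abs, Real.norm_eq_abs, sq_abs, sq_abs]
      simp only [conj_trivial]
      ring
    rw [h4] at h2
    refine le_of_mul_le_mul_left ?_ h0
    linarith
  by_contra hcon
  push Not at hcon
  have hc : 0 ≤ a * ‖y - x‖ ^ 2 := by positivity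
  generalize a * ‖y - x‖ ^ 2 = C at *
  obtain ⟨δ, hδ⟩ : ∃ δ, δ = φ x + a * ‖x - c‖ ^ 2 + C - (φ y + a * ‖y - c‖ ^ 2) := ⟨_, rfl⟩
  have hδ0 : 0 < δ := by linarith
  have hp : 0 < δ + C + 1 := by linarith
  have k := key (δ / (δ + C + 1)) (by positivity) (by rw [div_lt_one hp]; linarith)
  have k2 : δ / (δ + C + 1) * C < δ := by
    rw [div_mul_eq_mul_div, div_lt_iff₀ hp]
    nlinarith
  linarith

theorem aux_grad {EH : Type*} [NormedAddCommGroup EH] [InnerProductSpace ℝ EH]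
    [CompleteSpace EH] (g : EH → ℝ) (hg : ConvexOn ℝ Set.univ g) (hd : Differentiable ℝ g)
    (x y : EH) : g x + ⟪y - x, gradient g x⟫ ≤ g y := by
  have hconv := hg.comp_affineMap (AffineMap.lineMap x y : ℝ →ᵃ[ℝ] EH)
  have h1 : HasDerivAt (g ∘ (AffineMap.lineMap x y : ℝ →ᵃ[ℝ] EH)) (fderiv ℝ g x (y - x)) 0 := by
    have h2 : HasDerivAt (AffineMap.lineMap x y : ℝ → EH) (y - x) 0 :=
      AffineMap.hasDerivAt_lineMap
    have h3 : HasFDerivAt g (fderiv ℝ g x) ((AffineMap.lineMap x y : ℝ →ᵃ[ℝ] EH) 0) := by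
      simpa using (hd x).hasFDerivAt
    exact h3.comp_hasDerivAt (0 : ℝ) h2
  have h4 := hconv.le_slope_of_hasDerivAt (x := 0) (y := 1) (by simp) (by simp) one_pos h1
  have h5 : ⟪y - x, gradient g x⟫ = fderiv ℝ g x (y - x) := by
    rw [real_inner_comm, gradient, InnerProductSpace.toDual_symm_apply]
  simp [slope_def_field] at h4
  rw [h5]
  simp
  linarith

/-- Per-step key inequality for the COCO-Best2Worlds iteration
with `λ`-strongly convex losses `f_t`: for every `t ∈ {1,…,T}` and `M ∈ 𝓜`,
`V_t f_t(M_t) + V_t⟨M_{t+1} − M_t, ∇f_t(M_t)⟩ + Q_{t+1}²/2 − Q_t²/2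
  + γ_t g_t⁺(M_{t+1}) + η_t h⁺(M_{t+1}) + α_t‖M_{t+1} − M_t‖²
  ≤ V_t f_t(M) + Q_t (g_t(M) + ε) + ν_max² + γ_t g_t⁺(M) + η_t h⁺(M)
    + (α_t − λ V_t/2)‖M − M_t‖² − α_t‖M − M_{t+1}‖²`,
where `ν_max = E₀ + L D + ε`. -/
theorem stmt17 {EH : Type*} [NormedAddCommGroup EH] [InnerProductSpace ℝ EH]
    [FiniteDimensional ℝ EH]
    (Mset : Set EH) (hMset : Convex ℝ Mset) (D : ℝ)
    (hD : ∀ x ∈ Mset, ∀ y ∈ Mset, ‖x - y‖ ≤ D)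
    (T : ℕ) (f g : ℕ → EH → ℝ) (h : EH → ℝ) (L E₀ lam : ℝ) (hlam : 0 < lam)
    (hf_diff : ∀ t ∈ Finset.Icc 1 T, Differentiable ℝ (f t))
    (hf_sconv : ∀ t ∈ Finset.Icc 1 T, ∀ x y : EH,
      f t x + ⟪gradient (f t) x, y - x⟫ + lam / 2 * ‖y - x‖ ^ 2 ≤ f t y)
    (hf_grad : ∀ t ∈ Finset.Icc 1 T, ∀ x ∈ Mset, ‖gradient (f t) x‖ ≤ L)
    (hg_conv : ∀ t ∈ Finset.Icc 1 T, ConvexOn ℝ Set.univ (g t))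
    (hg_diff : ∀ t ∈ Finset.Icc 1 T, Differentiable ℝ (g t))
    (hg_grad : ∀ t ∈ Finset.Icc 1 T, ∀ x ∈ Mset, ‖gradient (g t) x‖ ≤ L)
    (hg_bdd : ∀ t ∈ Finset.Icc 1 T, ∀ x ∈ Mset, |g t x| ≤ E₀)
    (hh_conv : ConvexOn ℝ Set.univ h)
    (V γ η α : ℕ → ℝ) (ε : ℝ)
    (hV : ∀ t : ℕ, 1 ≤ t → 0 < V t) (hγ : ∀ t : ℕ, 1 ≤ t → 0 < γ t)
    (hη : ∀ t : ℕ, 1 ≤ t → 0 < η t) (hα : ∀ t : ℕ, 1 ≤ t → 0 < α t)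
    (hε : 0 ≤ ε)
    (M : ℕ → EH) (Q : ℕ → ℝ)
    (hM1 : M 1 ∈ Mset) (hQ1 : Q 1 = 0)
    (hMmem : ∀ t : ℕ, 1 ≤ t → M (t + 1) ∈ Mset)
    (hMmin : ∀ t : ℕ, 1 ≤ t → ∀ y ∈ Mset,
      V t * ⟪M (t + 1) - M t, gradient (f t) (M t)⟫ +
          Q t * ⟪M (t + 1) - M t, gradient (g t) (M t)⟫ +
          γ t * max (g t (M (t + 1))) 0 + η t * max (h (M (t + 1))) 0 +
          α t * ‖M (t + 1) - M t‖ ^ 2 ≤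
        V t * ⟪y - M t, gradient (f t) (M t)⟫ +
          Q t * ⟪y - M t, gradient (g t) (M t)⟫ +
          γ t * max (g t y) 0 + η t * max (h y) 0 + α t * ‖y - M t‖ ^ 2)
    (hQrec : ∀ t : ℕ, 1 ≤ t →
      Q (t + 1) =
        max (Q t + g t (M t) + ⟪M (t + 1) - M t, gradient (g t) (M t)⟫ + ε) 0) :
    ∀ t ∈ Finset.Icc 1 T, ∀ y ∈ Mset,
      V t * f t (M t) + V t * ⟪M (t + 1) - M t, gradient (f t) (M t)⟫ +
          1 / 2 * Q (t + 1) ^ 2 - 1 / 2 * Q t ^ 2 +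
          γ t * max (g t (M (t + 1))) 0 + η t * max (h (M (t + 1))) 0 +
          α t * ‖M (t + 1) - M t‖ ^ 2 ≤
        V t * f t y + Q t * (g t y + ε) + (E₀ + L * D + ε) ^ 2 +
          γ t * max (g t y) 0 + η t * max (h y) 0 +
          (α t - lam * V t / 2) * ‖y - M t‖ ^ 2 - α t * ‖y - M (t + 1)‖ ^ 2 := by
  intro t ht y hy
  have ht1 : 1 ≤ t := (Finset.mem_Icc.mp ht).1
  have hMt : M t ∈ Mset := by
    rcases Nat.exists_eq_add_of_le' ht1 with ⟨k, rfl⟩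
    rcases Nat.eq_zero_or_pos k with rfl | hk
    · exact hM1
    · exact hMmem k hk
  have hQ : 0 ≤ Q t := by
    rcases Nat.exists_eq_add_of_le' ht1 with ⟨k, rfl⟩
    rcases Nat.eq_zero_or_pos k with rfl | hk
    · exact hQ1.ge
    · rw [hQrec k hk]; exact le_max_right _ _
  have hlin : ∀ v : EH, ConvexOn ℝ Mset (fun z => ⟪z - M t, v⟫) := by
    intro v
    refine ⟨hMset, fun p _ q _ a b _ _ hab => le_of_eq ?_⟩
    simp only [inner_sub_left, inner_add_left, inner_smul_left, conj_trivial, smul_eq_mul]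
    linear_combination ⟪M t, v⟫ * hab
  have hpos : ∀ u : EH → ℝ, ConvexOn ℝ Set.univ u → ConvexOn ℝ Mset (fun z => max (u z) 0) := by
    intro u hu
    exact (hu.subset (Set.subset_univ _) hMset).sup (convexOn_const 0 hMset)
  have hφ : ConvexOn ℝ Mset (fun z => V t * ⟪z - M t, gradient (f t) (M t)⟫ +
          Q t * ⟪z - M t, gradient (g t) (M t)⟫ +
          γ t * max (g t z) 0 + η t * max (h z) 0) :=
    ((((hlin _).smul (hV t ht1).le).add ((hlin _).smul hQ)).add
      ((hpos _ (hg_conv t ht)).smul (hγ t ht1).le)).add ((hpos _ hh_conv).smul (hη t ht1).le)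
  have k1 := aux_min Mset hMset _ hφ (α t) (hα t ht1) (M t) (M (t + 1)) (hMmem t ht1)
    (hMmin t ht1) y hy
  have k2 := aux_grad (g t) (hg_conv t ht) (hg_diff t ht) (M t) y
  have k3 := hf_sconv t ht (M t) y
  rw [real_inner_comm] at k3
  have k4 := mul_le_mul_of_nonneg_left k2 hQ
  have k5 := mul_le_mul_of_nonneg_left k3 (hV t ht1).le
  have hL : 0 ≤ L := (norm_nonneg _).trans (hg_grad t ht _ hMt)
  have k6 : |⟪M (t + 1) - M t, gradient (g t) (M t)⟫| ≤ L * D := by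
    refine (abs_real_inner_le_norm _ _).trans ?_
    rw [mul_comm]
    exact mul_le_mul (hg_grad t ht _ hMt) (hD _ (hMmem t ht1) _ hMt) (norm_nonneg _) hL
  have k7 := hg_bdd t ht _ hMt
  have hrec := hQrec t ht1
  have k8 : Q (t + 1) ^ 2 ≤
      (Q t + (g t (M t) + ⟪M (t + 1) - M t, gradient (g t) (M t)⟫ + ε)) ^ 2 := by
    rw [hrec, sq_le_sq]
    rw [abs_of_nonneg (le_max_right _ _)]
    refine max_le ?_ (abs_nonneg _)
    refine le_trans (le_of_eq ?_) (le_abs_self _)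
    ring
  have k9 : (g t (M t) + ⟪M (t + 1) - M t, gradient (g t) (M t)⟫ + ε) ^ 2 ≤
      (E₀ + L * D + ε) ^ 2 := by
    rw [abs_le] at k6 k7
    apply sq_le_sq'
    · linarith
    · linarith
  have k10 := sq_nonneg (E₀ + L * D + ε)

  linarith
end
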